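/- arXiv:2302.13260 — 3 statements merged into one kernel-verified Lean document; each statement's English description precedes it below -/
import Mathlib

section
/- (Pick's Theorem) Let P be a convex polygon in the plane all of whose vertices are lattice points. Then area(P) = i(P) + b(P)/2 − 1, where i(P) is the number of lattice points in the interior of P and b(P) is the number of lattice points on the boundary of P. -/
open MeasureTheory

/-- The lattice sum identity for a single lattice segment. -/
lemma pick_line (p1 p2 q1 q2 : ℤ) (h : p1 < q1) (g : ℝ → ℝ)
    (hg : ∀ x : ℝ, p1 ≤ x → x ≤ q1 → g x * (q1 - p1) = (q2 - p2) * (x - p1) + p2 * (q1 - p1)) :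
    IntervalIntegrable g volume p1 q1 ∧
    2 * ∫ x in (p1:ℝ)..q1, g x = ((∑ x ∈ Finset.Ico p1 q1, ⌊g x⌋ + ∑ x ∈ Finset.Ioc p1 q1, ⌈g x⌉ : ℤ) : ℝ) := by
  have hpos : (0:ℝ) < q1 - p1 := by
    have : (p1:ℝ) < q1 := by exact_mod_cast h
    linarith
  have hne := hpos.ne'
  set m : ℝ := (q2 - p2) / (q1 - p1) with hm
  have hmm : m * (q1 - p1) = q2 - p2 := by rw [hm]; field_simp
  have hg' : ∀ x : ℝ, p1 ≤ x → x ≤ q1 → g x = m * (x - p1) + p2 := by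
    intro x h1 h2
    have := hg x h1 h2
    apply mul_right_cancel₀ hne
    rw [this]
    linear_combination (-(x - p1)) * hmm
  have hcongr : Set.EqOn (fun x : ℝ => m * (x - p1) + p2) g (Set.uIcc (p1:ℝ) q1) := by
    intro x hx
    rw [Set.uIcc_of_le (by linarith)] at hx
    exact (hg' x hx.1 hx.2).symm
  constructor
  · have : IntervalIntegrable (fun x : ℝ => m * (x - p1) + p2) volume p1 q1 := by
      apply Continuous.intervalIntegrable; fun_prop
    exact this.congr (fun x hx => hcongr (Set.uIoc_subset_uIcc hx))
  · rw [← intervalIntegral.integral_congr hcongr]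
    have e1 : ∑ x ∈ Finset.Ioc p1 q1, ⌈g x⌉ = ∑ x ∈ Finset.Ico p1 q1, (p2 + q2 - ⌊g x⌋) := by
      apply Finset.sum_bij' (fun x _ => p1 + q1 - x) (fun x _ => p1 + q1 - x)
      · intro x hx; simp only [Finset.mem_Ioc, Finset.mem_Ico] at *; omega
      · intro x hx; simp only [Finset.mem_Ioc, Finset.mem_Ico] at *; omega
      · intro x hx; omega
      · intro x hx; omega
      · intro x hx
        simp only [Finset.mem_Ioc] at hx
        have a1 : (p1:ℝ) ≤ x := by exact_mod_cast hx.1.le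
        have a2 : (x:ℝ) ≤ q1 := by exact_mod_cast hx.2
        have : g ((p1 + q1 - x : ℤ) : ℝ) = ((p2 + q2 : ℤ) : ℝ) - g x := by
          rw [hg' x a1 a2, hg' _ (by push_cast; linarith) (by push_cast; linarith)]
          push_cast
          linear_combination hmm
        rw [this, sub_eq_add_neg (((p2 + q2 : ℤ) : ℝ)), Int.floor_intCast_add, Int.floor_neg]
        ring
    rw [e1, ← Finset.sum_add_distrib]
    simp only [add_sub_cancel, Finset.sum_const, Int.card_Ico, nsmul_eq_mul]
    have hI : ∫ x in (p1:ℝ)..q1, (m * (x - p1) + p2) = m * (q1 - p1)^2/2 + p2 * (q1 - p1) := by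
      rw [intervalIntegral.integral_add (by apply Continuous.intervalIntegrable; fun_prop) (by simp),
        intervalIntegral.integral_const_mul, intervalIntegral.integral_sub (by simp) (by simp)]
      simp
      ring
    rw [hI]
    have : (((q1 - p1).toNat : ℤ)) = q1 - p1 := Int.toNat_of_nonneg (by omega)
    have h3 : (((q1 - p1).toNat : ℤ) : ℝ) = q1 - p1 := by rw [this]; push_cast; rfl
    push_cast at h3 ⊢
    rw [h3]
    linear_combination (q1 - p1 : ℝ) * hmm

/-- The inductive step along the upper hull. -/
lemma pick_upper_aux (V : Finset (ℤ × ℤ)) (g : ℝ → ℝ) (A B : ℤ)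
    (hA : ∀ p ∈ V, A ≤ p.1) (hB : ∀ p ∈ V, p.1 ≤ B) (hBm : ∃ p ∈ V, p.1 = B)
    (hc : ConcaveOn ℝ (Set.Icc (A:ℝ) B) g)
    (h0 : ∀ p ∈ V, (p.2 : ℝ) ≤ g p.1)
    (h2 : ∀ m k : ℝ, (∀ p ∈ V, (p.2:ℝ) ≤ m * p.1 + k) → ∀ x ∈ Set.Icc (A:ℝ) B, g x ≤ m * x + k) :
    ∀ n : ℕ, ∀ p ∈ V, (B - p.1).toNat = n → g p.1 = p.2 →
    IntervalIntegrable g volume p.1 B ∧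
    (2 * ∫ x in (p.1:ℝ)..B, g x = ((∑ x ∈ Finset.Ico p.1 B, ⌊g x⌋ + ∑ x ∈ Finset.Ioc p.1 B, ⌈g x⌉ : ℤ) : ℝ)) ∧
    ∃ z : ℤ, g B = z := by
  -- segments lie below the graph
  have h1 : ∀ p ∈ V, ∀ q ∈ V, ∀ x : ℝ, p.1 < q.1 → (p.1:ℝ) ≤ x → x ≤ q.1 →
      (q.2 - p.2) * (x - p.1) + p.2 * (q.1 - p.1) ≤ g x * (q.1 - p.1 : ℝ) := by
    intro p hp q hq x hpq hx1 hx2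
    have hpos : (0:ℝ) < q.1 - p.1 := by
      have : (p.1:ℝ) < q.1 := by exact_mod_cast hpq
      linarith
    have mem : ∀ r ∈ V, (r.1 : ℝ) ∈ Set.Icc (A:ℝ) B := fun r hr =>
      ⟨by exact_mod_cast hA r hr, by exact_mod_cast hB r hr⟩
    have := hc.2 (mem p hp) (mem q hq)
      (show 0 ≤ ((q.1:ℝ) - x) / ((q.1:ℝ) - p.1) from div_nonneg (by linarith) hpos.le)
      (show 0 ≤ (x - (p.1:ℝ)) / ((q.1:ℝ) - p.1) from div_nonneg (by linarith) hpos.le)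
      (by field_simp; ring)
    have e : (((q.1:ℝ) - x) / (q.1 - p.1)) • (p.1:ℝ) + ((x - (p.1:ℝ)) / (q.1 - p.1)) • (q.1:ℝ) = x := by
      simp only [smul_eq_mul]; field_simp; ring
    rw [e] at this
    simp only [smul_eq_mul] at this
    have t2 := mul_le_mul_of_nonneg_right this hpos.le
    have e2 : ((q.1 - x) / (q.1 - p.1) * g p.1 + (x - p.1) / (q.1 - p.1) * g q.1) * (q.1 - p.1 : ℝ)
      = (q.1 - x) * g p.1 + (x - p.1) * g q.1 := by field_simp
    rw [e2] at t2
    have u1 := mul_le_mul_of_nonneg_left (h0 p hp) (sub_nonneg.2 hx2)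
    have u2 := mul_le_mul_of_nonneg_left (h0 q hq) (sub_nonneg.2 hx1)
    nlinarith
  intro n
  induction n using Nat.strong_induction_on with
  | _ n ih =>
  intro p hp hn hgp
  rcases (hB p hp).eq_or_lt with hpB | hpB
  · rw [hpB] at hgp ⊢
    simp [hgp]
  · obtain ⟨b, hb, hbB⟩ := hBm
    obtain ⟨q, hq, hmax⟩ := Finset.exists_max_image (V.filter (fun q => p.1 < q.1))
      (fun q => ((q.2 - p.2 : ℝ) / (q.1 - p.1))) ⟨b, by simp [hb, hbB, hpB]⟩
    simp only [Finset.mem_filter] at hq hmax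
    obtain ⟨hqV, hpq⟩ := hq
    have hpos : (0:ℝ) < q.1 - p.1 := by
      have : (p.1:ℝ) < q.1 := by exact_mod_cast hpq
      linarith
    have hne := hpos.ne'
    set m : ℝ := (q.2 - p.2) / (q.1 - p.1) with hm
    have hmm : m * (q.1 - p.1) = q.2 - p.2 := by rw [hm]; field_simp
    have hline : ∀ r ∈ V, (r.2:ℝ) ≤ m * r.1 + (p.2 - m * p.1) := by
      intro r hr
      rcases lt_trichotomy p.1 r.1 with h | h | h
      · have := hmax r ⟨hr, h⟩
        have hr' : (0:ℝ) < r.1 - p.1 := by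
          have : (p.1:ℝ) < r.1 := by exact_mod_cast h
          linarith
        rw [div_le_iff₀ hr'] at this
        linarith
      · have := h0 r hr
        rw [← h, hgp] at this
        rw [← h]; linarith
      · have hr' : (r.1:ℝ) < p.1 := by exact_mod_cast h
        have := h1 r hr q hqV p.1 (h.trans hpq) hr'.le (by linarith)
        rw [hgp] at this
        by_contra hcon
        push Not at hcon
        have k := mul_pos hpos (sub_pos.2 hcon)
        have e : (q.1 - p.1 : ℝ) * (r.2 - (m * r.1 + (p.2 - m * p.1))) =
          (q.1 - p.1) * (r.2 - p.2) + (q.2 - p.2) * (p.1 - r.1) := by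
          linear_combination (p.1 - r.1 : ℝ) * hmm
        rw [e] at k
        nlinarith
    have hgl := h2 _ _ hline
    have hpA : (A:ℝ) ≤ p.1 := by exact_mod_cast hA p hp
    have hqB : (q.1:ℝ) ≤ B := by exact_mod_cast hB q hqV
    have hg : ∀ x : ℝ, p.1 ≤ x → x ≤ q.1 →
        g x * (q.1 - p.1) = (q.2 - p.2) * (x - p.1) + p.2 * (q.1 - p.1) := by
      intro x hx1 hx2
      apply le_antisymm _ (h1 p hp q hqV x hpq hx1 hx2)
      have := hgl x ⟨by linarith, by linarith⟩
      have := mul_le_mul_of_nonneg_right this hpos.le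
      refine this.trans (le_of_eq ?_)
      linear_combination (x - p.1) * hmm
    have hgq : g q.1 = q.2 := by
      have := hg q.1 (by linarith) le_rfl
      apply mul_right_cancel₀ hne
      rw [this]; ring
    obtain ⟨i1, i2⟩ := pick_line p.1 p.2 q.1 q.2 hpq g hg
    obtain ⟨j1, j2, j3⟩ := ih (B - q.1).toNat (by have := hB q hqV; omega) q hqV rfl hgq
    refine ⟨i1.trans j1, ?_, j3⟩
    rw [← intervalIntegral.integral_add_adjacent_intervals i1 j1, mul_add, i2, j2]
    have s1 : ∑ x ∈ Finset.Ico p.1 q.1, ⌊g x⌋ + ∑ x ∈ Finset.Ico q.1 B, ⌊g x⌋ =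
        ∑ x ∈ Finset.Ico p.1 B, ⌊g x⌋ := by
      rw [← Finset.sum_union]
      · rw [Finset.Ico_union_Ico_eq_Ico hpq.le (hB q hqV)]
      · rw [Finset.disjoint_left]; intro x; simp only [Finset.mem_Ico]; omega
    have s2 : ∑ x ∈ Finset.Ioc p.1 q.1, ⌈g x⌉ + ∑ x ∈ Finset.Ioc q.1 B, ⌈g x⌉ =
        ∑ x ∈ Finset.Ioc p.1 B, ⌈g x⌉ := by
      rw [← Finset.sum_union]
      · rw [Finset.Ioc_union_Ioc_eq_Ioc hpq.le (hB q hqV)]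
      · rw [Finset.disjoint_left]; intro x; simp only [Finset.mem_Ioc]; omega
    rw [← s1, ← s2]; push_cast; ring

lemma pick_upper (V : Finset (ℤ × ℤ)) (g : ℝ → ℝ) (A B : ℤ)
    (hA : ∀ p ∈ V, A ≤ p.1) (hAm : ∃ p ∈ V, p.1 = A)
    (hB : ∀ p ∈ V, p.1 ≤ B) (hBm : ∃ p ∈ V, p.1 = B)
    (hc : ConcaveOn ℝ (Set.Icc (A:ℝ) B) g)
    (h0 : ∀ p ∈ V, (p.2 : ℝ) ≤ g p.1)
    (h2 : ∀ m k : ℝ, (∀ p ∈ V, (p.2:ℝ) ≤ m * p.1 + k) → ∀ x ∈ Set.Icc (A:ℝ) B, g x ≤ m * x + k) :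
    IntervalIntegrable g volume A B ∧
    (2 * ∫ x in (A:ℝ)..B, g x = ((∑ x ∈ Finset.Ico A B, ⌊g x⌋ + ∑ x ∈ Finset.Ioc A B, ⌈g x⌉ : ℤ) : ℝ)) ∧
    (∃ z : ℤ, g A = z) ∧ ∃ z : ℤ, g B = z := by
  obtain ⟨a, ha, haA⟩ := hAm
  obtain ⟨p, hp, hmax⟩ := Finset.exists_max_image (V.filter (fun q => q.1 = A)) (fun q => q.2)
      ⟨a, by simp [ha, haA]⟩
  simp only [Finset.mem_filter] at hp hmax
  obtain ⟨hpV, hpA⟩ := hp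
  have hgp : g p.1 = p.2 := by
    apply le_antisymm _ (h0 p hpV)
    set m : ℝ := ∑ q ∈ V, |(q.2 - p.2 : ℝ)| with hm
    have hm0 : 0 ≤ m := Finset.sum_nonneg fun _ _ => abs_nonneg _
    have := h2 m (p.2 - m * A) (by
      intro q hq
      rcases (hA q hq).eq_or_lt with h | h
      · have : (q.2:ℝ) ≤ p.2 := by exact_mod_cast hmax q ⟨hq, h.symm⟩
        rw [h]; linarith
      · have h' : (A:ℝ) + 1 ≤ q.1 := by exact_mod_cast h
        have : |(q.2 - p.2 : ℝ)| ≤ m :=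
          Finset.single_le_sum (f := fun q : ℤ × ℤ => |(q.2 - p.2 : ℝ)|) (fun _ _ => abs_nonneg _) hq
        have := (le_abs_self _).trans this
        nlinarith) A ⟨le_rfl, by exact_mod_cast hpA ▸ hB p hpV⟩
    rw [hpA]; linarith
  have := pick_upper_aux V g A B hA hB hBm hc h0 h2 _ p hpV rfl hgp
  rw [hpA] at this hgp
  exact ⟨this.1, this.2.1, ⟨_, hgp⟩, this.2.2⟩

lemma pick_fiber_count (S : Set (ℤ × ℤ)) (I : Finset ℤ) (J : ℤ → Finset ℤ)
    (h : ∀ p : ℤ × ℤ, p ∈ S ↔ p.1 ∈ I ∧ p.2 ∈ J p.1) :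
    S.Finite ∧ S.ncard = ∑ x ∈ I, (J x).card := by
  have : S = ((I.sigma J).map (Equiv.sigmaEquivProd ℤ ℤ).toEmbedding : Finset (ℤ × ℤ)) := by
    ext p
    rw [h]
    constructor
    · intro hp
      simp only [Finset.coe_map, Set.mem_image, Finset.mem_coe, Finset.mem_sigma]
      exact ⟨⟨p.1, p.2⟩, hp, rfl⟩
    · intro hp
      simp only [Finset.coe_map, Set.mem_image, Finset.mem_coe, Finset.mem_sigma] at hp
      obtain ⟨q, hq, rfl⟩ := hp
      exact hq
  rw [this]
  refine ⟨Finset.finite_toSet _, ?_⟩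
  rw [Set.ncard_coe_finset, Finset.card_map, Finset.card_sigma]

lemma pick_count (A B : ℤ) (hAB : A < B) (F G : ℝ → ℝ)
    (hle : ∀ x ∈ Set.Icc (A:ℝ) B, F x ≤ G x) (hlt : ∀ x ∈ Set.Ioo (A:ℝ) B, F x < G x)
    (S T : Set (ℤ × ℤ))
    (hS : ∀ p : ℤ × ℤ, p ∈ S ↔ (p.1:ℝ) ∈ Set.Ioo (A:ℝ) B ∧ F p.1 < p.2 ∧ p.2 < G p.1)
    (hT : ∀ p : ℤ × ℤ, p ∈ T ↔ (p.1:ℝ) ∈ Set.Icc (A:ℝ) B ∧ F p.1 ≤ p.2 ∧ p.2 ≤ G p.1)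
    (hFB : ∃ z : ℤ, F B = z)
    (hGB : ∃ z : ℤ, G B = z) :
    T.Finite ∧ (T.ncard + S.ncard : ℤ) =
      (∑ x ∈ Finset.Ico A B, ⌊G x⌋ + ∑ x ∈ Finset.Ioc A B, ⌈G x⌉) +
      (∑ x ∈ Finset.Ico A B, ⌊-F x⌋ + ∑ x ∈ Finset.Ioc A B, ⌈-F x⌉) + 2 := by
  obtain ⟨-, c1⟩ := pick_fiber_count S (Finset.Ioo A B) (fun x => Finset.Ioo ⌊F x⌋ ⌈G x⌉) (by
    intro p
    rw [hS]
    simp [Int.floor_lt, Int.lt_ceil])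
  obtain ⟨f2, c2⟩ := pick_fiber_count T (Finset.Icc A B) (fun x => Finset.Icc ⌈F x⌉ ⌊G x⌋) (by
    intro p
    rw [hT]
    simp [Int.ceil_le, Int.le_floor])
  refine ⟨f2, ?_⟩
  rw [c1, c2]
  push_cast
  have e1 : ∑ x ∈ Finset.Ioo A B, ((Finset.Ioo ⌊F x⌋ ⌈G x⌉).card : ℤ) =
      ∑ x ∈ Finset.Ioo A B, (⌈G x⌉ + ⌈-F x⌉ - 1) := by
    apply Finset.sum_congr rfl
    intro x hx
    have hx' : (x:ℝ) ∈ Set.Ioo (A:ℝ) B := by simpa using hx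
    have h1 : ⌊F x⌋ < ⌈G x⌉ := by
      rw [Int.floor_lt]; exact (hlt x hx').trans_le (Int.le_ceil _)
    rw [Int.card_Ioo, Int.ceil_neg, Int.toNat_of_nonneg (by omega)]
    ring
  have e2 : ∑ x ∈ Finset.Icc A B, ((Finset.Icc ⌈F x⌉ ⌊G x⌋).card : ℤ) =
      ∑ x ∈ Finset.Icc A B, (⌊G x⌋ + ⌊-F x⌋ + 1) := by
    apply Finset.sum_congr rfl
    intro x hx
    have hx' : (x:ℝ) ∈ Set.Icc (A:ℝ) B := by simpa using hx
    have h1 : ⌈F x⌉ ≤ ⌊G x⌋ + 1 := by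
      rw [Int.ceil_le]; push_cast
      exact (hle x hx').trans (Int.lt_floor_add_one _).le
    rw [Int.card_Icc, Int.floor_neg, Int.toNat_of_nonneg (by omega)]
    ring
  rw [e1, e2]
  have k1 : Finset.Icc A B = insert B (Finset.Ico A B) := by
    ext x; simp only [Finset.mem_insert, Finset.mem_Icc, Finset.mem_Ico]; omega
  have k2 : Finset.Ioc A B = insert B (Finset.Ioo A B) := by
    ext x; simp only [Finset.mem_insert, Finset.mem_Ioc, Finset.mem_Ioo]; omega
  rw [k1, k2, Finset.sum_insert (by simp), Finset.sum_insert (by simp), Finset.sum_insert (by simp)]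
  obtain ⟨u, hu⟩ := hFB
  obtain ⟨v, hv⟩ := hGB
  rw [hu, hv]
  simp only [Finset.sum_add_distrib, Finset.sum_sub_distrib, Finset.sum_const, Int.card_Ico,
    Int.card_Ioo, nsmul_eq_mul, mul_one, Int.floor_intCast, Int.ceil_intCast, Int.floor_neg,
    Int.ceil_neg]
  rw [Int.toNat_of_nonneg (by omega), Int.toNat_of_nonneg (by omega)]
  ring

theorem stmt4 (V : Finset (ℤ × ℤ)) (P : Set (ℝ × ℝ))
    (hP : P = convexHull ℝ ((fun p : ℤ × ℤ => ((p.1 : ℝ), (p.2 : ℝ))) '' (V : Set (ℤ × ℤ))))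
    (hint : (interior P).Nonempty) :
    (volume P).toReal =
      ({p : ℤ × ℤ | ((p.1 : ℝ), (p.2 : ℝ)) ∈ interior P}.ncard : ℝ) +
        ({p : ℤ × ℤ | ((p.1 : ℝ), (p.2 : ℝ)) ∈ frontier P}.ncard : ℝ) / 2 - 1 := by
  have hconv : Convex ℝ P := hP ▸ convex_convexHull ℝ _
  have hcomp : IsCompact P := by
    rw [hP]
    exact (V.finite_toSet.image _).isCompact_convexHull (𝕜 := ℝ)
  have hVP : ∀ p ∈ V, ((p.1:ℝ), (p.2:ℝ)) ∈ P := fun p hp => by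
    rw [hP]; exact subset_convexHull ℝ _ ⟨p, hp, rfl⟩
  -- half planes
  have hhalf : ∀ a b c : ℝ, (∀ p ∈ V, a * p.1 + b * p.2 ≤ c) → ∀ z ∈ P, a * z.1 + b * z.2 ≤ c := by
    intro a b c h z hz
    have hcv : Convex ℝ {z : ℝ × ℝ | a * z.1 + b * z.2 ≤ c} := by
      intro x hx y hy s t hs ht hst
      simp only [Set.mem_ofPred_eq, Prod.fst_add, Prod.smul_fst, Prod.snd_add, Prod.smul_snd,
        smul_eq_mul] at *
      have h1 := mul_le_mul_of_nonneg_left hx hs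
      have h2 := mul_le_mul_of_nonneg_left hy ht
      have h3 : s * c + t * c = c := by rw [← add_mul, hst, one_mul]
      nlinarith
    rw [hP] at hz
    refine convexHull_min ?_ hcv hz
    rintro _ ⟨p, hp, rfl⟩
    exact h p hp
  have hVne : V.Nonempty := by
    rw [Finset.nonempty_iff_ne_empty]
    rintro rfl
    simp [hP] at hint
  obtain ⟨pA, hpA, hAmin⟩ := Finset.exists_min_image V (fun p => p.1) hVne
  obtain ⟨pB, hpB, hBmax⟩ := Finset.exists_max_image V (fun p => p.1) hVne
  obtain ⟨A, hA⟩ : ∃ A, A = pA.1 := ⟨_, rfl⟩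
  obtain ⟨B, hB⟩ : ∃ B, B = pB.1 := ⟨_, rfl⟩
  rw [← hA] at hAmin
  rw [← hB] at hBmax
  have hPx : ∀ z ∈ P, z.1 ∈ Set.Icc (A:ℝ) B := by
    intro z hz
    constructor
    · have := hhalf (-1) 0 (-A) (fun p hp => by
        have : (A:ℝ) ≤ p.1 := by exact_mod_cast hAmin p hp
        linarith) z hz
      linarith
    · have := hhalf 1 0 B (fun p hp => by
        have : (p.1:ℝ) ≤ B := by exact_mod_cast hBmax p hp
        linarith) z hz
      linarith
  -- interior points are strictly inside
  have hnear : ∀ z ∈ interior P, ∃ e > 0, (z.1 - e, z.2) ∈ P ∧ (z.1 + e, z.2) ∈ P ∧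
      (z.1, z.2 - e) ∈ P ∧ (z.1, z.2 + e) ∈ P := by
    intro z hz
    rw [mem_interior_iff_mem_nhds, Metric.mem_nhds_iff] at hz
    obtain ⟨e, he, hball⟩ := hz
    refine ⟨e / 2, by linarith, ?_, ?_, ?_, ?_⟩ <;>
    · apply hball
      rw [Metric.mem_ball, Prod.dist_eq]
      simp [abs_of_pos he, he]
  have hIx : ∀ z ∈ interior P, z.1 ∈ Set.Ioo (A:ℝ) B := by
    intro z hz
    obtain ⟨e, he, h1, h2, -, -⟩ := hnear z hz
    have h1 := (hPx _ h1).1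
    have h2 := (hPx _ h2).2
    simp only at h1 h2
    exact ⟨by linarith, by linarith⟩
  have hAB : (A:ℝ) < B := by
    obtain ⟨z, hz⟩ := hint
    exact (hIx z hz).1.trans (hIx z hz).2
  have hABz : A < B := by exact_mod_cast hAB
  set S : ℝ → Set ℝ := fun x => Prod.mk x ⁻¹' P with hS
  have hScomp : ∀ x, IsCompact (S x) := by
    intro x
    refine IsCompact.of_isClosed_subset (hcomp.image continuous_snd)
      (hcomp.isClosed.preimage (by fun_prop)) ?_
    intro y hy
    exact ⟨(x, y), hy, rfl⟩
  have hSne : ∀ x ∈ Set.Icc (A:ℝ) B, (S x).Nonempty := by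
    intro x hx
    have hpos : (0:ℝ) < B - A := by linarith
    have := hconv (hVP pA hpA) (hVP pB hpB) (a := ((B:ℝ) - x) / ((B:ℝ) - A))
      (b := (x - A) / ((B:ℝ) - A)) (div_nonneg (by linarith [hx.2]) hpos.le)
      (div_nonneg (by linarith [hx.1]) hpos.le) (by field_simp; ring)
    rw [← hA, ← hB] at this
    have e : ((B:ℝ) - x) / ((B:ℝ) - A) * A + (x - A) / ((B:ℝ) - A) * B = x := by
      field_simp
      ring
    simp only [Prod.smul_mk, Prod.mk_add_mk, smul_eq_mul, e] at this
    exact ⟨_, this⟩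
  have hSconv : ∀ x, Convex ℝ (S x) := by
    intro x y hy z hz s t hs ht hst
    have := hconv (show (x, y) ∈ P from hy) (show (x, z) ∈ P from hz) hs ht hst
    show (x, _) ∈ P
    convert this using 1
    refine Prod.ext ?_ rfl
    simp only [Prod.fst_add, Prod.smul_fst, smul_eq_mul]
    rw [← add_mul, hst, one_mul]
  set F : ℝ → ℝ := fun x => sInf (S x) with hF
  set G : ℝ → ℝ := fun x => sSup (S x) with hG
  have hSI : ∀ x ∈ Set.Icc (A:ℝ) B, S x = Set.Icc (F x) (G x) := by
    intro x hx
    exact eq_Icc_of_connected_compact ⟨hSne x hx, (hSconv x).isPreconnected⟩ (hScomp x)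
  have hmemP : ∀ x y, (x, y) ∈ P ↔ x ∈ Set.Icc (A:ℝ) B ∧ F x ≤ y ∧ y ≤ G x := by
    intro x y
    constructor
    · intro h
      have hx := hPx _ h
      have : y ∈ S x := h
      rw [hSI x hx] at this
      exact ⟨hx, this⟩
    · rintro ⟨hx, h⟩
      show y ∈ S x
      rw [hSI x hx]
      exact h
  have hle : ∀ x ∈ Set.Icc (A:ℝ) B, F x ≤ G x := by
    intro x hx
    obtain ⟨y, hy⟩ := hSne x hx
    have := (hmemP x y).1 hy
    linarith [this.2.1, this.2.2]
  have hFm : ∀ x ∈ Set.Icc (A:ℝ) B, (x, F x) ∈ P := fun x hx =>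
    (hmemP _ _).2 ⟨hx, le_rfl, hle x hx⟩
  have hGm : ∀ x ∈ Set.Icc (A:ℝ) B, (x, G x) ∈ P := fun x hx =>
    (hmemP _ _).2 ⟨hx, hle x hx, le_rfl⟩
  have hGc : ConcaveOn ℝ (Set.Icc (A:ℝ) B) G := by
    refine ⟨convex_Icc _ _, ?_⟩
    intro x hx y hy s t hs ht hst
    exact ((hmemP _ _).1 (hconv (hGm x hx) (hGm y hy) hs ht hst)).2.2
  have hFc : ConvexOn ℝ (Set.Icc (A:ℝ) B) F := by
    refine ⟨convex_Icc _ _, ?_⟩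
    intro x hx y hy s t hs ht hst
    exact ((hmemP _ _).1 (hconv (hFm x hx) (hFm y hy) hs ht hst)).2.1
  -- interior
  have hIntF : ∀ z ∈ interior P, F z.1 < z.2 ∧ z.2 < G z.1 := by
    intro z hz
    obtain ⟨e, he, -, -, h1, h2⟩ := hnear z hz
    have h1 := ((hmemP _ _).1 h1).2.1
    have h2 := ((hmemP _ _).1 h2).2.2
    exact ⟨by linarith, by linarith⟩
  have hmemI : ∀ x y, (x, y) ∈ interior P ↔ x ∈ Set.Ioo (A:ℝ) B ∧ F x < y ∧ y < G x := by
    intro x y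
    constructor
    · intro h
      exact ⟨hIx _ h, hIntF _ h⟩
    · rintro ⟨hx, h1, h2⟩
      have cG := hGc.continuousOn_interior
      have cF := hFc.continuousOn_interior
      rw [interior_Icc] at cG cF
      have cG := cG.continuousAt (isOpen_Ioo.mem_nhds hx)
      have cF := cF.continuousAt (isOpen_Ioo.mem_nhds hx)
      rw [mem_interior_iff_mem_nhds]
      have c1 : ContinuousAt (fun z : ℝ × ℝ => G z.1) (x, y) :=
        ContinuousAt.comp (f := fun z : ℝ × ℝ => z.1) (g := G) cG continuous_fst.continuousAt
      have c2 : ContinuousAt (fun z : ℝ × ℝ => F z.1) (x, y) :=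
        ContinuousAt.comp (f := fun z : ℝ × ℝ => z.1) (g := F) cF continuous_fst.continuousAt
      have c3 : ContinuousAt (fun z : ℝ × ℝ => z.2) (x, y) := continuous_snd.continuousAt
      have c4 : ContinuousAt (fun z : ℝ × ℝ => z.1) (x, y) := continuous_fst.continuousAt
      filter_upwards [c3.eventually_lt c1 h2, c2.eventually_lt c3 h1,
        c4.eventually (isOpen_Ioo.mem_nhds hx)] with z u1 u2 u3
      exact (hmemP z.1 z.2).2 ⟨⟨u3.1.le, u3.2.le⟩, u2.le, u1.le⟩
  have hlt : ∀ x ∈ Set.Ioo (A:ℝ) B, F x < G x := by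
    intro x hx
    obtain ⟨z, hz⟩ := hint
    have hzx := hIx z hz
    have key : ∀ w ∈ P, x ∈ openSegment ℝ z.1 w.1 → F x < G x := by
      rintro w hw ⟨s, t, hs, ht, hst, hxe⟩
      have := hconv.openSegment_interior_self_subset_interior hz hw ⟨s, t, hs, ht, hst, rfl⟩
      have := hIntF _ this
      simp only [Prod.fst_add, Prod.smul_fst] at this
      rw [hxe] at this
      exact this.1.trans this.2
    rcases lt_trichotomy x z.1 with h | h | h
    · refine key _ (hGm A ⟨le_rfl, hAB.le⟩) ?_
      rw [openSegment_symm, openSegment_eq_Ioo hzx.1]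
      exact ⟨hx.1, h⟩
    · rw [h]
      exact (hIntF z hz).1.trans (hIntF z hz).2
    · refine key _ (hGm B ⟨hAB.le, le_rfl⟩) ?_
      rw [openSegment_eq_Ioo hzx.2]
      exact ⟨h, hx.2⟩
  -- the two hulls
  obtain ⟨iG, sG, -, gB⟩ := pick_upper V G A B hAmin ⟨pA, hpA, hA.symm⟩ hBmax ⟨pB, hpB, hB.symm⟩
    hGc (fun p hp => ((hmemP _ _).1 (hVP p hp)).2.2) (by
      intro m k h x hx
      have := hhalf (-m) 1 k (fun p hp => by linarith [h p hp]) _ (hGm x hx)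
      simp only at this
      linarith)
  obtain ⟨iF, sF, -, fB⟩ := pick_upper (V.image (fun p => (p.1, -p.2))) (fun x => -F x) A B
    (by
      intro q hq
      obtain ⟨p, hp, rfl⟩ := Finset.mem_image.1 hq
      exact hAmin p hp)
    ⟨(pA.1, -pA.2), Finset.mem_image_of_mem (fun p : ℤ × ℤ => (p.1, -p.2)) hpA, hA.symm⟩
    (by
      intro q hq
      obtain ⟨p, hp, rfl⟩ := Finset.mem_image.1 hq
      exact hBmax p hp)
    ⟨(pB.1, -pB.2), Finset.mem_image_of_mem (fun p : ℤ × ℤ => (p.1, -p.2)) hpB, hB.symm⟩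
    hFc.neg
    (by
      intro q hq
      obtain ⟨p, hp, rfl⟩ := Finset.mem_image.1 hq
      have := ((hmemP _ _).1 (hVP p hp)).2.1
      push_cast
      linarith) (by
      intro m k h x hx
      have := hhalf (-m) (-1) k (fun p hp => by
        have := h _ (Finset.mem_image_of_mem (fun p : ℤ × ℤ => (p.1, -p.2)) hp)
        push_cast at this
        linarith) _ (hFm x hx)
      simp only at this
      linarith)
  have neg_int : ∀ x : ℝ, (∃ z : ℤ, -x = z) → ∃ z : ℤ, x = z := by
    rintro x ⟨z, hz⟩
    exact ⟨-z, by push_cast; linarith⟩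
  obtain ⟨Tfin, hcount⟩ := pick_count A B hABz F G hle hlt
    {p : ℤ × ℤ | ((p.1 : ℝ), (p.2 : ℝ)) ∈ interior P} {p : ℤ × ℤ | ((p.1 : ℝ), (p.2 : ℝ)) ∈ P}
    (fun p => hmemI _ _) (fun p => hmemP _ _) (neg_int _ fB) gB
  -- boundary count
  have hfr : {p : ℤ × ℤ | ((p.1 : ℝ), (p.2 : ℝ)) ∈ frontier P} =
      {p : ℤ × ℤ | ((p.1 : ℝ), (p.2 : ℝ)) ∈ P} \ {p : ℤ × ℤ | ((p.1 : ℝ), (p.2 : ℝ)) ∈ interior P} := by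
    rw [hcomp.isClosed.frontier_eq]; rfl
  have hsub : {p : ℤ × ℤ | ((p.1 : ℝ), (p.2 : ℝ)) ∈ interior P} ⊆
      {p : ℤ × ℤ | ((p.1 : ℝ), (p.2 : ℝ)) ∈ P} := fun p hp => interior_subset (s := P) hp
  have hfc := Set.ncard_sdiff_add_ncard_of_subset hsub Tfin
  rw [← hfr] at hfc
  -- area
  have hvol : (volume P).toReal = ∫ x in (A:ℝ)..B, (G x + -F x) := by
    have hnn : ∀ x ∈ Set.Icc (A:ℝ) B, 0 ≤ G x + -F x := fun x hx => by linarith [hle x hx]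
    have hInt : IntegrableOn (fun x => G x + -F x) (Set.Icc (A:ℝ) B) volume := by
      rw [← intervalIntegrable_iff_integrableOn_Icc_of_le hAB.le]
      exact iG.add iF
    have hv : volume P = ∫⁻ x in Set.Icc (A:ℝ) B, ENNReal.ofReal (G x + -F x) := by
      rw [Measure.volume_eq_prod, Measure.prod_apply hcomp.isClosed.measurableSet,
        ← lintegral_indicator measurableSet_Icc]
      congr 1
      ext x
      by_cases hx : x ∈ Set.Icc (A:ℝ) B
      · rw [Set.indicator_of_mem hx]
        have := hSI x hx
        simp only [hS] at this
        rw [this, Real.volume_Icc, sub_eq_add_neg]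
      · rw [Set.indicator_of_notMem hx]
        have : Prod.mk x ⁻¹' P = ∅ := by
          rw [Set.eq_empty_iff_forall_notMem]
          intro y hy
          exact hx (hPx _ hy)
        rw [this, measure_empty]
    have hae : 0 ≤ᵐ[volume.restrict (Set.Icc (A:ℝ) B)] fun x => G x + -F x :=
      ae_restrict_of_forall_mem measurableSet_Icc hnn
    rw [hv, ← ofReal_integral_eq_lintegral_ofReal hInt hae,
      ENNReal.toReal_ofReal (integral_nonneg_of_ae hae), intervalIntegral.integral_of_le hAB.le,
      integral_Icc_eq_integral_Ioc]
  rw [hvol, intervalIntegral.integral_add iG iF]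
  have hcR := congrArg (fun z : ℤ => (z : ℝ)) hcount
  have hfR := congrArg (fun z : ℕ => (z : ℝ)) hfc
  push_cast at hcR hfR sG sF
  linarith
end

section
/- Fix positive integers i < n and set j = n − i. Let D_k be the set of tuples ((a_l,b_l))_{l≤k} of pairs of positive integers with a_1+⋯+a_k = i, b_1+⋯+b_k = n, and 1 > a_1/b_1 > ⋯ > a_k/b_k > 0. Then ∑_{k≥1} ∑_{((a_l,b_l)) ∈ D_k} (q−1)^{k−1} q^{1−k} q^{[∑_{1≤l₁<l₂≤k}(a_{l₁} b_{l₂} − a_{l₂} b_{l₁}) + ∑_{1≤l≤k} gcd(a_l,b_l)]/2} = q^{(ij−n)/2 + 1}, as an identity of functions of q (equivalently, of elements of ℚ(q^{1/2}) or after clearing half-integer exponents, of polynomials in q). -/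
open scoped Classical

namespace HNY

/-- Determinant of two lattice vectors. -/
def dt (v w : ℕ × ℕ) : ℤ := (v.1 : ℤ) * w.2 - (v.2 : ℤ) * w.1

/-- Interior lattice points of the box. -/
def box (V : ℕ × ℕ) : Finset (ℕ × ℕ) := Finset.Ioo 0 V.1 ×ˢ Finset.Ioo 0 V.2

lemma mem_box {V p : ℕ × ℕ} : p ∈ box V ↔ (0 < p.1 ∧ p.1 < V.1) ∧ (0 < p.2 ∧ p.2 < V.2) := by
  simp [box]

/-- Points of the box on or below the ray `v`. -/
noncomputable def N (V v : ℕ × ℕ) : ℕ := ((box V).filter (fun p => dt v p ≤ 0)).card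

/-- Sweep order. -/
def before (p w : ℕ × ℕ) : Prop := dt w p < 0 ∨ (dt w p = 0 ∧ w.1 < p.1)

noncomputable def R (V w : ℕ × ℕ) : ℕ := ((box V).filter (fun p => before p w)).card

/-- Strictly below the diagonal. -/
noncomputable def T (V : ℕ × ℕ) : ℕ := ((box V).filter (fun p => 0 < dt p V)).card

lemma diag_card (V : ℕ × ℕ) (h1 : 0 < V.1) (h2 : 0 < V.2) :
    ((box V).filter (fun p => dt p V = 0)).card = Nat.gcd V.1 V.2 - 1 := by
  obtain ⟨a, c⟩ := V
  simp only at h1 h2 ⊢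
  obtain ⟨g, a', c', hg, hcop, rfl, rfl⟩ := Nat.exists_coprime' (Nat.gcd_pos_of_pos_left c h1)
  have ha' : 0 < a' := Nat.pos_of_mul_pos_right h1
  have hc' : 0 < c' := Nat.pos_of_mul_pos_right h2
  have hgcd : Nat.gcd (a' * g) (c' * g) = g := by
    rw [Nat.gcd_mul_right, hcop.gcd_eq_one, one_mul]
  rw [hgcd]
  have : (box (a' * g, c' * g)).filter (fun p => dt p (a' * g, c' * g) = 0)
      = (Finset.Ioo 0 g).image (fun m => (a' * m, c' * m)) := by
    ext ⟨x, y⟩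
    simp only [Finset.mem_filter, mem_box, Finset.mem_image, Finset.mem_Ioo, Prod.mk.injEq]
    simp only [dt]
    constructor
    · rintro ⟨⟨⟨hx, hx'⟩, hy, hy'⟩, h⟩
      have h' : x * c' = y * a' := by
        have : (x * c') * g = (y * a') * g := by
          zify; push_cast at h; linarith
        exact Nat.eq_of_mul_eq_mul_right hg this
      have hd : a' ∣ x := hcop.dvd_of_dvd_mul_right (Dvd.intro_left y h'.symm)
      obtain ⟨m, rfl⟩ := hd
      refine ⟨m, ⟨Nat.pos_of_mul_pos_left hx, lt_of_mul_lt_mul_left hx' (Nat.zero_le _)⟩, rfl, ?_⟩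
      have : a' * (c' * m) = a' * y := by nlinarith
      exact Nat.eq_of_mul_eq_mul_left ha' this
    · rintro ⟨m, ⟨hm, hm'⟩, rfl, rfl⟩
      refine ⟨⟨⟨by positivity, by gcongr⟩, by positivity, by gcongr⟩, ?_⟩
      push_cast; ring
  rw [this, Finset.card_image_of_injective]
  · simp
  · intro m m' h
    simp only [Prod.mk.injEq] at h
    exact Nat.eq_of_mul_eq_mul_left ha' h.1

lemma T_formula (V : ℕ × ℕ) (h1 : 0 < V.1) (h2 : 0 < V.2) :
    2 * (T V : ℤ) = ((V.1 : ℤ) - 1) * (V.2 - 1) - (Nat.gcd V.1 V.2 - 1) := by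
  have hg : 0 < Nat.gcd V.1 V.2 := Nat.gcd_pos_of_pos_left _ h1
  have hd := diag_card V h1 h2
  have hsym : ((box V).filter (fun p => dt p V < 0)).card = T V := by
    unfold T
    refine Finset.card_nbij' (fun p => (V.1 - p.1, V.2 - p.2)) (fun p => (V.1 - p.1, V.2 - p.2))
      ?_ ?_ ?_ ?_
    · rintro ⟨x, y⟩ h
      simp only [Finset.mem_coe, Finset.mem_filter, mem_box] at h ⊢
      simp only [dt] at h ⊢
      obtain ⟨⟨⟨_, hx⟩, _, hy⟩, h⟩ := h
      refine ⟨⟨⟨by omega, by omega⟩, by omega, by omega⟩, ?_⟩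
      rw [Nat.cast_sub hx.le, Nat.cast_sub hy.le]
      nlinarith
    · rintro ⟨x, y⟩ h
      simp only [Finset.mem_coe, Finset.mem_filter, mem_box] at h ⊢
      simp only [dt] at h ⊢
      obtain ⟨⟨⟨_, hx⟩, _, hy⟩, h⟩ := h
      refine ⟨⟨⟨by omega, by omega⟩, by omega, by omega⟩, ?_⟩
      rw [Nat.cast_sub hx.le, Nat.cast_sub hy.le]
      nlinarith
    · rintro ⟨x, y⟩ h
      simp only [Finset.mem_coe, Finset.mem_filter, mem_box] at h
      simp only [dt] at h
      ext <;> simp <;> omega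
    · rintro ⟨x, y⟩ h
      simp only [Finset.mem_coe, Finset.mem_filter, mem_box] at h
      simp only [dt] at h
      ext <;> simp <;> omega
  have htot : (box V).card = (V.1 - 1) * (V.2 - 1) := by
    simp [box, Finset.card_product]
  have s1 := Finset.card_filter_add_card_filter_not (s := box V) (fun p => 0 < dt p V)
  have s2 := Finset.card_filter_add_card_filter_not
    (s := (box V).filter (fun p => ¬ 0 < dt p V)) (fun p => dt p V = 0)
  rw [Finset.filter_filter, Finset.filter_filter] at s2
  have e1 : (box V).filter (fun p => ¬ 0 < dt p V ∧ dt p V = 0)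
      = (box V).filter (fun p => dt p V = 0) := Finset.filter_congr (by intros; omega)
  have e2 : (box V).filter (fun p => ¬ 0 < dt p V ∧ ¬ dt p V = 0)
      = (box V).filter (fun p => dt p V < 0) := Finset.filter_congr (by intros; omega)
  rw [e1, e2, hd, hsym] at s2
  rw [← s2, htot] at s1
  change T V + _ = _ at s1
  zify [Nat.one_le_iff_ne_zero.mpr h1.ne', Nat.one_le_iff_ne_zero.mpr h2.ne',
    Nat.one_le_iff_ne_zero.mpr hg.ne'] at s1
  linarith

lemma R_formula (V w : ℕ × ℕ) (hw : w ∈ box V) :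
    R V w = N (V - w) w + (V.1 - 1 - w.1) * w.2 + T w + (w.2 - 1) := by
  obtain ⟨i, j⟩ := V
  obtain ⟨a, c⟩ := w
  simp only [mem_box] at hw
  obtain ⟨⟨ha, hai⟩, hc, hcj⟩ := hw
  have hN : N ((i, j) - (a, c)) (a, c)
      = ((box (i, j)).filter (fun p => before p (a, c) ∧ a < p.1 ∧ c < p.2)).card := by
    unfold N
    refine Finset.card_nbij' (fun p => (p.1 + a, p.2 + c)) (fun p => (p.1 - a, p.2 - c))
      ?_ ?_ ?_ ?_
    · rintro ⟨x, y⟩ h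
      simp only [Finset.mem_coe, Finset.mem_filter, mem_box] at h ⊢
      simp only [dt, before, Prod.fst_sub, Prod.snd_sub] at h ⊢
      obtain ⟨⟨⟨_, hx⟩, _, hy⟩, h⟩ := h
      refine ⟨⟨⟨by omega, by omega⟩, by omega, by omega⟩, ?_, by omega, by omega⟩
      push_cast
      have e : (a : ℤ) * (y + c) - c * (x + a) = a * y - c * x := by ring
      rw [e]
      omega
    · rintro ⟨x, y⟩ h
      simp only [Finset.mem_coe, Finset.mem_filter, mem_box] at h ⊢
      simp only [dt, before, Prod.fst_sub, Prod.snd_sub] at h ⊢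
      obtain ⟨⟨⟨_, hx⟩, _, hy⟩, h, hax, hcy⟩ := h
      refine ⟨⟨⟨by omega, by omega⟩, by omega, by omega⟩, ?_⟩
      rw [Nat.cast_sub hax.le, Nat.cast_sub hcy.le]
      have e : (a : ℤ) * (y - c) - c * (x - a) = a * y - c * x := by ring
      rw [e]
      omega
    · rintro ⟨x, y⟩ h
      ext <;> simp
    · rintro ⟨x, y⟩ h
      simp only [Finset.mem_coe, Finset.mem_filter, mem_box] at h
      ext <;> simp <;> omega
  have hB : (i - 1 - a) * c
      = ((box (i, j)).filter (fun p => before p (a, c) ∧ a < p.1 ∧ ¬ c < p.2)).card := by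
    have : (box (i, j)).filter (fun p => before p (a, c) ∧ a < p.1 ∧ ¬ c < p.2)
        = Finset.Ioo a i ×ˢ Finset.Ioc 0 c := by
      ext ⟨x, y⟩
      simp only [Finset.mem_filter, mem_box, Finset.mem_product, Finset.mem_Ioo, Finset.mem_Ioc]
      simp only [before, dt]
      constructor
      · rintro ⟨⟨⟨_, hx⟩, hy, hy'⟩, h, hax, hcy⟩
        omega
      · rintro ⟨⟨hx, hx'⟩, hy, hy'⟩
        refine ⟨by omega, Or.inl ?_, by omega, by omega⟩
        have : a * y < c * x := by nlinarith
        zify at this; linarith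
    rw [this, Finset.card_product]
    simp only [Nat.card_Ioo, Nat.card_Ioc]
    congr 1
    omega
  have hT : T (a, c)
      = ((box (i, j)).filter (fun p => before p (a, c) ∧ ¬ a < p.1 ∧ p.1 < a)).card := by
    unfold T
    congr 1
    ext ⟨x, y⟩
    simp only [Finset.mem_filter, mem_box]
    simp only [before, dt]
    constructor
    · rintro ⟨⟨⟨_, hx⟩, hy, hy'⟩, h⟩
      refine ⟨by omega, Or.inl (by linarith), by omega, by omega⟩
    · rintro ⟨⟨⟨h0, hx⟩, hy, hy'⟩, h, hax, hcy⟩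
      have h' : (a : ℤ) * y - c * x < 0 := by omega
      have : a * y < c * x := by zify; linarith
      refine ⟨⟨⟨h0, hcy⟩, hy, ?_⟩, by linarith⟩
      nlinarith
  have hE : c - 1
      = ((box (i, j)).filter (fun p => before p (a, c) ∧ ¬ a < p.1 ∧ ¬ p.1 < a)).card := by
    have : (box (i, j)).filter (fun p => before p (a, c) ∧ ¬ a < p.1 ∧ ¬ p.1 < a)
        = {a} ×ˢ Finset.Ioo 0 c := by
      ext ⟨x, y⟩
      simp only [Finset.mem_filter, mem_box, Finset.mem_product, Finset.mem_Ioo, Finset.mem_singleton]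
      simp only [before, dt]
      constructor
      · rintro ⟨⟨⟨h0, hx⟩, hy, hy'⟩, h, hax, hcy⟩
        have hxa : x = a := by omega
        subst hxa
        refine ⟨rfl, hy, ?_⟩
        have h' : (x : ℤ) * y - c * x < 0 := by omega
        have : x * y < c * x := by zify; linarith
        nlinarith
      · rintro ⟨rfl, hy, hy'⟩
        refine ⟨by omega, Or.inl ?_, by omega, by omega⟩
        have : x * y < c * x := by nlinarith
        zify at this; linarith
    rw [this, Finset.card_product]
    simp
  rw [hN, hT]
  simp only
  rw [hB]
  conv_rhs => rw [hE]
  unfold R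
  have s0 := Finset.card_filter_add_card_filter_not
    (s := (box (i, j)).filter (fun p => before p (a, c))) (fun p => a < p.1)
  have s1 := Finset.card_filter_add_card_filter_not
    (s := (box (i, j)).filter (fun p => before p (a, c) ∧ a < p.1)) (fun p => c < p.2)
  have s2 := Finset.card_filter_add_card_filter_not
    (s := (box (i, j)).filter (fun p => before p (a, c) ∧ ¬ a < p.1)) (fun p => p.1 < a)
  simp only [Finset.filter_filter, and_assoc] at s0 s1 s2
  omega

/-- Geometric sum over ranks. -/
lemma rank_sum {α β : Type*} [LinearOrder β] (key : α → β) (t : ℝ) (C : Finset α)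
    (hinj : Set.InjOn key C) :
    ∑ w ∈ C, (1 - t) * t ^ (C.filter (fun p => key p < key w)).card = 1 - t ^ C.card := by
  induction C using Finset.induction_on_max_value key with
  | empty => simp
  | insert a s ha hmax ih =>
    rw [Finset.sum_insert ha, Finset.card_insert_of_notMem ha]
    have hlt : ∀ x ∈ s, key x < key a := fun x hx => lt_of_le_of_ne (hmax x hx) (fun h => ha (by
      have := hinj (by simp [hx]) (by simp) h
      rwa [← this]))
    have e1 : (insert a s).filter (fun p => key p < key a) = s := by
      ext x
      simp only [Finset.mem_filter, Finset.mem_insert]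
      constructor
      · rintro ⟨rfl | h, h'⟩
        · exact absurd h' (lt_irrefl _)
        · exact h
      · exact fun h => ⟨Or.inr h, hlt x h⟩
    have e2 : ∀ w ∈ s, (insert a s).filter (fun p => key p < key w)
        = s.filter (fun p => key p < key w) := by
      intro w hw
      rw [Finset.filter_insert, if_neg (not_lt.mpr (hmax w hw))]
    rw [e1, Finset.sum_congr rfl (fun w hw => by rw [e2 w hw]),
      ih (hinj.mono (by simp))]
    ring

lemma before_iff (p w : ℕ × ℕ) (hp : 0 < p.1) (hw : 0 < w.1) :
    toLex ((p.2 : ℚ) / p.1, -(p.1 : ℤ)) < toLex ((w.2 : ℚ) / w.1, -(w.1 : ℤ)) ↔ before p w := by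
  have hp' : (0 : ℚ) < p.1 := by exact_mod_cast hp
  have hw' : (0 : ℚ) < w.1 := by exact_mod_cast hw
  rw [Prod.Lex.toLex_lt_toLex]
  simp only
  rw [div_lt_div_iff₀ hp' hw', div_eq_div_iff hp'.ne' hw'.ne']
  have i1 : (p.2 : ℚ) * w.1 < w.2 * p.1 ↔ (p.2 : ℤ) * w.1 < w.2 * p.1 := by norm_cast
  have i2 : (p.2 : ℚ) * w.1 = w.2 * p.1 ↔ (p.2 : ℤ) * w.1 = w.2 * p.1 := by norm_cast
  rw [i1, i2]
  unfold before dt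
  zify
  constructor
  · rintro (h | ⟨h, h'⟩)
    · left; linarith
    · right; constructor <;> linarith
  · rintro (h | ⟨h, h'⟩)
    · left; linarith
    · right; constructor <;> linarith

noncomputable def C (V v : ℕ × ℕ) : Finset (ℕ × ℕ) :=
  (box V).filter (fun p => 0 < dt v p ∧ 0 < dt p V)

lemma key_inj : Set.InjOn (fun p : ℕ × ℕ => toLex ((p.2 : ℚ) / p.1, -(p.1 : ℤ)))
    {p | 0 < p.1} := by
  rintro ⟨x, y⟩ hx ⟨x', y'⟩ hx' h
  simp only [Set.mem_ofPred_eq, EmbeddingLike.apply_eq_iff_eq, Prod.mk.injEq, neg_inj,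
    Nat.cast_inj] at hx hx' h
  obtain ⟨h, rfl⟩ := h
  have : (x : ℚ) ≠ 0 := by exact_mod_cast hx.ne'
  rw [div_left_inj' this] at h
  simpa using h

lemma R_eq (V v w : ℕ × ℕ) (hv : 0 < v.1) (hw : w ∈ C V v) :
    R V w = N V v + ((C V v).filter (fun p => before p w)).card := by
  simp only [C, Finset.mem_filter, mem_box] at hw
  obtain ⟨⟨⟨hw1, hw2⟩, hw3, hw4⟩, hvw, hwV⟩ := hw
  have s := Finset.card_filter_add_card_filter_not
    (s := (box V).filter (fun p => before p w)) (fun p => dt v p ≤ 0)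
  simp only [Finset.filter_filter] at s
  unfold R N C
  rw [← s]
  congr 2
  · apply Finset.filter_congr
    intro p hp
    rw [mem_box] at hp
    constructor
    · exact fun h => h.2
    · intro h
      refine ⟨Or.inl ?_, h⟩
      unfold dt at *
      zify at *
      by_contra hcon
      have h1 : (v.1 : ℤ) * ((w.1 : ℤ) * p.2) ≥ v.1 * (w.2 * p.1) := by
        apply mul_le_mul_of_nonneg_left <;> linarith
      nlinarith
  · rw [Finset.filter_filter]
    apply Finset.filter_congr
    intro p hp
    rw [mem_box] at hp
    constructor
    · rintro ⟨h, h'⟩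
      refine ⟨⟨by omega, ?_⟩, h⟩
      have hb : dt w p ≤ 0 := by unfold before at h; omega
      unfold dt at *
      zify at *
      have h1 : (w.1 * (p.1 * V.2 - p.2 * V.1) : ℤ) > 0 := by nlinarith
      exact (mul_pos_iff_of_pos_left (by assumption)).mp h1
    · rintro ⟨⟨h, _⟩, h'⟩
      exact ⟨h', by omega⟩

lemma T_eq (V v : ℕ × ℕ) (hv : 0 < v.1) (hV : 0 < dt v V) :
    T V = N V v + (C V v).card := by
  have s := Finset.card_filter_add_card_filter_not
    (s := (box V).filter (fun p => 0 < dt p V)) (fun p => dt v p ≤ 0)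
  simp only [Finset.filter_filter] at s
  unfold T N C
  rw [← s]
  congr 2
  · apply Finset.filter_congr
    intro p hp
    rw [mem_box] at hp
    constructor
    · exact fun h => h.2
    · intro h
      refine ⟨?_, h⟩
      unfold dt at *
      zify at *
      have h1 : (v.1 * (p.1 * V.2 - p.2 * V.1) : ℤ) > 0 := by nlinarith
      exact (mul_pos_iff_of_pos_left (by assumption)).mp h1
  · apply Finset.filter_congr
    intro p hp
    constructor <;> (rintro ⟨h, h'⟩; constructor <;> omega)

lemma telescope (V v : ℕ × ℕ) (t : ℝ) (hv : 0 < v.1) (hV : 0 < dt v V) :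
    t ^ T V + ∑ w ∈ C V v, (1 - t) * t ^ R V w = t ^ N V v := by
  have hpos : ∀ p ∈ C V v, 0 < p.1 := fun p hp => by
    simp only [C, Finset.mem_filter, mem_box] at hp; exact hp.1.1.1
  have h := rank_sum (fun p : ℕ × ℕ => toLex ((p.2 : ℚ) / p.1, -(p.1 : ℤ))) t (C V v)
    (key_inj.mono hpos)
  have e : ∑ w ∈ C V v, (1 - t) * t ^ R V w = t ^ N V v * (1 - t ^ (C V v).card) := by
    rw [← h, Finset.mul_sum]
    apply Finset.sum_congr rfl
    intro w hw
    rw [R_eq V v w hv hw, pow_add,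
      Finset.filter_congr (fun p hp => (before_iff p w (hpos p hp) (hpos w hw)))]
    ring
  rw [e, T_eq V v hv hV, pow_add]
  ring


noncomputable def D (k : ℕ) (V v : ℕ × ℕ) : Finset (Fin k → ℕ × ℕ) :=
  (Fintype.piFinset (fun _ : Fin k => Finset.Icc ((1 : ℕ), (1 : ℕ)) V)).filter
    (fun f => ∑ l, f l = V ∧ (∀ l, 0 < dt v (f l)) ∧ ∀ l₁ l₂, l₁ < l₂ → 0 < dt (f l₁) (f l₂))

lemma mem_D {k : ℕ} {V v : ℕ × ℕ} {f : Fin k → ℕ × ℕ} : f ∈ D k V v ↔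
    (∀ l, 0 < (f l).1 ∧ 0 < (f l).2) ∧ ∑ l, f l = V ∧ (∀ l, 0 < dt v (f l)) ∧
      ∀ l₁ l₂, l₁ < l₂ → 0 < dt (f l₁) (f l₂) := by
  simp only [D, Finset.mem_filter, Fintype.mem_piFinset, Finset.mem_Icc, Prod.le_def]
  constructor
  · rintro ⟨h1, h2⟩
    exact ⟨fun l => (h1 l).1, h2⟩
  · rintro ⟨h1, h2⟩
    refine ⟨fun l => ⟨h1 l, ?_⟩, h2⟩
    rw [← Prod.le_def, ← h2.1]
    exact Finset.single_le_sum (f := f) (fun _ _ => zero_le) (Finset.mem_univ l)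

noncomputable def wt (q : ℝ) (k : ℕ) (f : Fin k → ℕ × ℕ) : ℝ :=
  (q - 1) ^ (k - 1) * q ^ ((1 - (k : ℝ)) +
    ((∑ l₂ : Fin k, ∑ l₁ : Fin k, if l₁ < l₂ then (dt (f l₁) (f l₂) : ℝ) else 0)
      + ∑ l, (Nat.gcd (f l).1 (f l).2 : ℝ)) / 2)

lemma dt_sum {ι : Type*} (s : Finset ι) (w : ℕ × ℕ) (f : ι → ℕ × ℕ) :
    dt w (∑ l ∈ s, f l) = ∑ l ∈ s, dt w (f l) := by
  simp only [dt, Prod.fst_sum, Prod.snd_sum, Finset.sum_sub_distrib, Nat.cast_sum, Finset.mul_sum]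

lemma dt_add (w u v : ℕ × ℕ) : dt w (u + v) = dt w u + dt w v := by
  simp only [dt, Prod.fst_add, Prod.snd_add]; push_cast; ring

lemma dt_self (w : ℕ × ℕ) : dt w w = 0 := by simp only [dt]; ring

lemma dt_trans {u v w : ℕ × ℕ} (hu : 0 < u.1) (hw : 0 < w.1) (hv : 0 < v.1)
    (h1 : 0 < dt u v) (h2 : 0 < dt v w) : 0 < dt u w := by
  unfold dt at *
  zify at hu hv hw
  have : 0 < (v.1 : ℤ) * (u.1 * w.2 - u.2 * w.1) := by nlinarith
  exact (mul_pos_iff_of_pos_left hv).mp this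

lemma wt_cons (q : ℝ) (hq : 0 < q) (k : ℕ) (w : ℕ × ℕ) (f : Fin (k + 1) → ℕ × ℕ) :
    wt q (k + 2) (Fin.cons w f : Fin (k + 2) → ℕ × ℕ) =
      (1 - q⁻¹) * q ^ (((dt w (∑ l, f l) : ℝ) + Nat.gcd w.1 w.2) / 2) * wt q (k + 1) f := by
  unfold wt
  rw [Fin.sum_univ_succ, Fin.sum_univ_succ (f := fun l => (Nat.gcd _ _ : ℝ))]
  simp only [Fin.sum_univ_succ (n := k + 1), Fin.cons_zero, Fin.cons_succ, Fin.not_lt_zero,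
    Fin.succ_pos, Fin.succ_lt_succ_iff, if_true, if_false, Finset.sum_const_zero,
    Finset.sum_add_distrib, add_zero, zero_add]
  rw [dt_sum]
  push_cast
  have e : (q - 1) ^ (k + 1) = (1 - q⁻¹) * q * (q - 1) ^ k := by
    have : (1 - q⁻¹) * q = q - 1 := by field_simp
    rw [this]
    ring
  rw [e]
  have e2 : ∀ A B : ℝ, (1 - q⁻¹) * q * A * q ^ B = (1 - q⁻¹) * (A * q ^ (1 + B)) := by
    intro A B
    rw [Real.rpow_add hq, Real.rpow_one]; ring
  rw [e2]
  have e3 : ∀ A X Y : ℝ, (1 - q⁻¹) * q ^ X * (A * q ^ Y) = (1 - q⁻¹) * (A * q ^ (X + Y)) := by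
    intro A X Y
    rw [Real.rpow_add hq]; ring
  rw [e3]
  congr 3
  ring

lemma step (q : ℝ) (hq : 0 < q) (k : ℕ) (V v : ℕ × ℕ) (hv : 0 < v.1) :
    ∑ f ∈ D (k + 2) V v, wt q (k + 2) f =
      ∑ w ∈ C V v, (1 - q⁻¹) * q ^ (((dt w V : ℝ) + Nat.gcd w.1 w.2) / 2) *
        ∑ f ∈ D (k + 1) (V - w) w, wt q (k + 1) f := by
  simp only [Finset.mul_sum]
  rw [Finset.sum_sigma']
  refine Finset.sum_bij' (fun f _ => ⟨f 0, Fin.tail f⟩)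
    (fun p _ => (Fin.cons p.1 p.2 : Fin (k + 2) → ℕ × ℕ)) ?_ ?_ ?_ ?_ ?_
  · intro f hf
    rw [mem_D] at hf
    obtain ⟨h1, h2, h3, h4⟩ := hf
    rw [Fin.sum_univ_succ] at h2
    have hs1 : 0 < (∑ l : Fin (k + 1), f l.succ).1 := by
      rw [Prod.fst_sum]; exact Finset.sum_pos (fun l _ => (h1 _).1) ⟨0, Finset.mem_univ _⟩
    have hs2 : 0 < (∑ l : Fin (k + 1), f l.succ).2 := by
      rw [Prod.snd_sum]; exact Finset.sum_pos (fun l _ => (h1 _).2) ⟨0, Finset.mem_univ _⟩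
    have hd : 0 < dt (f 0) (∑ l : Fin (k + 1), f l.succ) := by
      rw [dt_sum]
      exact Finset.sum_pos (fun l _ => h4 _ _ (Fin.succ_pos l)) ⟨0, Finset.mem_univ _⟩
    rw [Finset.mem_sigma, mem_D, C, Finset.mem_filter, mem_box]
    refine ⟨⟨⟨⟨(h1 0).1, ?_⟩, (h1 0).2, ?_⟩, h3 0, ?_⟩, fun l => h1 _, ?_, fun l => ?_,
      fun l₁ l₂ h => ?_⟩
    · rw [← h2, Prod.fst_add]; exact Nat.lt_add_of_pos_right hs1
    · rw [← h2, Prod.snd_add]; exact Nat.lt_add_of_pos_right hs2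
    · rw [← h2, dt_add, dt_self, zero_add]; exact hd
    · rw [← h2]; simp [Fin.tail]
    · exact h4 _ _ (Fin.succ_pos l)
    · exact h4 _ _ (Fin.succ_lt_succ_iff.mpr h)
  · rintro ⟨w, f⟩ hf
    rw [Finset.mem_sigma, mem_D, C, Finset.mem_filter, mem_box] at hf
    obtain ⟨⟨⟨⟨a1, a2⟩, a3, a4⟩, a5, a6⟩, h1, h2, h3, h4⟩ := hf
    simp only at a1 a2 a3 a4 a5 a6 h1 h2 h3 h4 ⊢
    rw [mem_D]
    refine ⟨?_, ?_, ?_, ?_⟩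
    · intro l
      refine Fin.cases ?_ (fun l => ?_) l
      · exact ⟨a1, a3⟩
      · simpa using h1 l
    · rw [Fin.sum_univ_succ]
      simp only [Fin.cons_zero, Fin.cons_succ]
      rw [h2]
      ext <;> simp <;> omega
    · intro l
      refine Fin.cases ?_ (fun l => ?_) l
      · simpa using a5
      · simpa using dt_trans hv (h1 l).1 a1 a5 (h3 l)
    · intro l₁ l₂
      refine Fin.cases ?_ (fun l₁ => ?_) l₁
      · refine Fin.cases ?_ (fun l₂ => ?_) l₂
        · intro h; exact absurd h (lt_irrefl _)
        · intro _; simpa using h3 l₂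
      · refine Fin.cases ?_ (fun l₂ => ?_) l₂
        · intro h; exact absurd h (Fin.not_lt_zero _)
        · intro h; simpa using h4 l₁ l₂ (Fin.succ_lt_succ_iff.mp h)
  · intro f _
    simp
  · rintro ⟨w, f⟩ _
    simp
  · intro f hf
    rw [mem_D] at hf
    obtain ⟨h1, h2, h3, h4⟩ := hf
    rw [Fin.sum_univ_succ] at h2
    have hd : dt (f 0) V = dt (f 0) (∑ l, Fin.tail f l) := by
      rw [← h2, dt_add, dt_self, zero_add]; rfl
    simp only
    rw [hd, ← wt_cons q hq, Fin.cons_self_tail]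

lemma base (q : ℝ) (V v : ℕ × ℕ) (h1 : 0 < V.1) (h2 : 0 < V.2) (hV : 0 < dt v V) :
    ∑ f ∈ D 1 V v, wt q 1 f = q ^ ((Nat.gcd V.1 V.2 : ℝ) / 2) := by
  have : D 1 V v = {fun _ => V} := by
    ext f
    rw [mem_D, Finset.mem_singleton]
    constructor
    · rintro ⟨_, h, _⟩
      ext1 l
      rw [← h, Fin.sum_univ_one, Subsingleton.elim l 0]
    · rintro rfl
      refine ⟨fun _ => ⟨h1, h2⟩, by simp, fun _ => hV, fun l₁ l₂ h => ?_⟩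
      exact absurd h (by simp [Subsingleton.elim l₁ l₂])
  rw [this, Finset.sum_singleton, wt]
  simp

lemma main (q : ℝ) (hq : 0 < q) (K : ℕ) : ∀ (V v : ℕ × ℕ), V.1 ≤ K → 0 < V.1 → 0 < V.2 →
    0 < v.1 → 0 < dt v V →
    ∑ k ∈ Finset.range K, ∑ f ∈ D (k + 1) V v, wt q (k + 1) f =
      q ^ (((V.1 : ℝ) * V.2 - V.1 - V.2) / 2 + 1) * q⁻¹ ^ N V v := by
  induction K with
  | zero => intro V v h h'; omega
  | succ K ih =>
    intro V v hK h1 h2 hv hV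
    rw [Finset.sum_range_succ', base q V v h1 h2 hV]
    have hst : ∀ k ∈ Finset.range K, ∑ f ∈ D (k + 1 + 1) V v, wt q (k + 1 + 1) f = _ :=
      fun k _ => step q hq k V v hv
    rw [Finset.sum_congr rfl hst]
    rw [Finset.sum_comm]
    simp only [← Finset.mul_sum]
    rw [← telescope V v q⁻¹ hv hV, mul_add, Finset.mul_sum, add_comm]
    have hp : ∀ m : ℕ, q⁻¹ ^ m = q ^ (-(m : ℝ)) := by
      intro m; rw [Real.rpow_neg hq.le, Real.rpow_natCast, inv_pow]
    congr 1
    · rw [hp, ← Real.rpow_add hq]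
      congr 1
      have := T_formula V h1 h2
      have h' : 2 * (T V : ℝ) = ((V.1 : ℝ) - 1) * (V.2 - 1) - (Nat.gcd V.1 V.2 - 1) := by
        exact_mod_cast this
      linarith
    · apply Finset.sum_congr rfl
      intro w hw
      have hw' := hw
      simp only [C, Finset.mem_filter] at hw'
      obtain ⟨hwb, hvw, hwV⟩ := hw'
      have hR := R_formula V w hwb
      rw [mem_box] at hwb
      obtain ⟨⟨a1, a2⟩, a3, a4⟩ := hwb
      have hVw : V = w + (V - w) := by ext <;> simp <;> omega
      have hd : 0 < dt w (V - w) := by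
        have : dt w V = dt w w + dt w (V - w) := by rw [← dt_add, ← hVw]
        rw [dt_self] at this; omega
      have hsum := ih (V - w) w (by rw [Prod.fst_sub]; omega) (by rw [Prod.fst_sub]; omega)
        (by rw [Prod.snd_sub]; omega) a1 hd
      rw [hsum, hp, hp]
      rw [← Real.rpow_add hq, mul_assoc, ← Real.rpow_add hq, mul_left_comm, ← Real.rpow_add hq]
      congr 2
      have hT := T_formula w a1 a3
      have hT' : 2 * (T w : ℝ) = ((w.1 : ℝ) - 1) * (w.2 - 1) - (Nat.gcd w.1 w.2 - 1) := by
        exact_mod_cast hT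
      have hR' : (R V w : ℝ) = N (V - w) w + ((V.1 : ℝ) - 1 - w.1) * w.2 + T w + (w.2 - 1) := by
        rw [hR]
        push_cast [Nat.cast_sub (show w.1 ≤ V.1 - 1 by omega), Nat.cast_sub (show 1 ≤ V.1 by omega),
          Nat.cast_sub (show 1 ≤ w.2 by omega)]
        ring
      rw [hR', Prod.fst_sub, Prod.snd_sub, Nat.cast_sub a2.le, Nat.cast_sub a4.le]
      simp only [dt]
      push_cast
      linarith

lemma convert_sum (q : ℝ) (i j k : ℕ) :
    ∑ f ∈ (Fintype.piFinset (fun _ : Fin k => Finset.Icc ((1 : ℕ), (1 : ℕ)) (i, i + j))).filter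
          (fun f : Fin k → ℕ × ℕ =>
            (∀ l, 0 < (f l).1 ∧ 0 < (f l).2) ∧ (∑ l, (f l).1 = i) ∧ (∑ l, (f l).2 = i + j) ∧
            (∀ l, ((f l).1 : ℚ) / ((f l).2 : ℚ) < 1) ∧
            (∀ l, 0 < ((f l).1 : ℚ) / ((f l).2 : ℚ)) ∧
            (∀ l₁ l₂ : Fin k, l₁ < l₂ →
              ((f l₂).1 : ℚ) / ((f l₂).2 : ℚ) < ((f l₁).1 : ℚ) / ((f l₁).2 : ℚ))),
          (q - 1) ^ (k - 1) *
            q ^ ((1 - (k : ℝ)) +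
              ((∑ l₂ : Fin k, ∑ l₁ : Fin k, if l₁ < l₂ then
                  ((f l₁).1 : ℝ) * ((f l₂).2 : ℝ) - ((f l₂).1 : ℝ) * ((f l₁).2 : ℝ) else 0)
                + ∑ l, (Nat.gcd (f l).1 (f l).2 : ℝ)) / 2)
      = ∑ f ∈ D k (i, j) (1, 0), wt q k f := by
  symm
  refine Finset.sum_bij' (fun f _ l => ((f l).1, (f l).1 + (f l).2))
    (fun f _ l => ((f l).1, (f l).2 - (f l).1)) ?_ ?_ ?_ ?_ ?_
  · intro f hf
    rw [mem_D] at hf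
    obtain ⟨h1, h2, h3, h4⟩ := hf
    have s1 : ∑ l, (f l).1 = i := by rw [← Prod.fst_sum, h2]
    have s2 : ∑ l, (f l).2 = j := by rw [← Prod.snd_sum, h2]
    have b1 : ∀ l, (f l).1 ≤ i := fun l => by
      rw [← s1]
      exact Finset.single_le_sum (f := fun l => (f l).1) (fun _ _ => Nat.zero_le _)
        (Finset.mem_univ l)
    have b2 : ∀ l, (f l).2 ≤ j := fun l => by
      rw [← s2]
      exact Finset.single_le_sum (f := fun l => (f l).2) (fun _ _ => Nat.zero_le _)
        (Finset.mem_univ l)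
    have p1 : ∀ l, (0 : ℚ) < (f l).1 := fun l => by exact_mod_cast (h1 l).1
    have p2 : ∀ l, (0 : ℚ) < (f l).2 := fun l => by exact_mod_cast (h1 l).2
    simp only [Finset.mem_filter, Fintype.mem_piFinset, Finset.mem_Icc, Prod.mk_le_mk]
    refine ⟨fun l => ?_, fun l => ?_, s1, ?_, fun l => ?_, fun l => ?_, fun l₁ l₂ h => ?_⟩
    · have := b1 l; have := b2 l; have := h1 l; omega
    · have := h1 l; omega
    · rw [Finset.sum_add_distrib, s1, s2]
    · push_cast
      have := p1 l; have := p2 l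
      rw [div_lt_one (by positivity)]; linarith
    · push_cast
      have := p1 l; have := p2 l
      positivity
    · push_cast
      have := p1 l₁; have := p2 l₁; have := p1 l₂; have := p2 l₂
      rw [div_lt_div_iff₀ (by positivity) (by positivity)]
      have h' := h4 l₁ l₂ h
      unfold dt at h'
      have h'' : (0 : ℚ) < (f l₁).1 * (f l₂).2 - (f l₁).2 * (f l₂).1 := by exact_mod_cast h'
      linarith
  · intro f hf
    simp only [Finset.mem_filter] at hf
    obtain ⟨-, h1, s1, s2, h3, h4, h5⟩ := hf
    have p1 : ∀ l, (0 : ℚ) < (f l).1 := fun l => by exact_mod_cast (h1 l).1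
    have p2 : ∀ l, (0 : ℚ) < (f l).2 := fun l => by exact_mod_cast (h1 l).2
    have lt : ∀ l, (f l).1 < (f l).2 := fun l => by
      have := h3 l
      rw [div_lt_one (p2 l)] at this
      exact_mod_cast this
    rw [mem_D]
    refine ⟨fun l => ?_, ?_, fun l => ?_, fun l₁ l₂ h => ?_⟩
    · have := lt l; have := h1 l; simp only; omega
    · ext
      · rw [Prod.fst_sum]; exact s1
      · rw [Prod.snd_sum]
        have : ∑ l, (f l).1 + ∑ l, ((f l).2 - (f l).1) = ∑ l, (f l).2 := by
          rw [← Finset.sum_add_distrib]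
          exact Finset.sum_congr rfl (fun l _ => by have := lt l; omega)
        simp only
        omega
    · have := lt l
      simp only [dt]
      push_cast [Nat.cast_sub this.le]
      zify at this
      linarith
    · have h' := h5 l₁ l₂ h
      rw [div_lt_div_iff₀ (p2 _) (p2 _)] at h'
      have h'' : ((f l₂).1 : ℤ) * (f l₁).2 < (f l₁).1 * (f l₂).2 := by exact_mod_cast h'
      simp only [dt]
      push_cast [Nat.cast_sub (lt l₁).le, Nat.cast_sub (lt l₂).le]
      linarith
  · intro f _
    ext l <;> simp
  · intro f hf
    simp only [Finset.mem_filter] at hf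
    obtain ⟨-, h1, s1, s2, h3, h4, h5⟩ := hf
    have p2 : ∀ l, (0 : ℚ) < (f l).2 := fun l => by exact_mod_cast (h1 l).2
    have lt : ∀ l, (f l).1 < (f l).2 := fun l => by
      have := h3 l
      rw [div_lt_one (p2 l)] at this
      exact_mod_cast this
    ext l
    · simp
    · have := lt l
      simp; omega
  · intro f _
    unfold wt
    have e1 : ∀ l₂ l₁ : Fin k, (if l₁ < l₂ then (dt (f l₁) (f l₂) : ℝ) else 0) =
        if l₁ < l₂ then ((f l₁).1 : ℝ) * (((f l₂).1 + (f l₂).2 : ℕ) : ℝ)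
          - ((f l₂).1 : ℝ) * (((f l₁).1 + (f l₁).2 : ℕ) : ℝ) else 0 := by
      intro l₂ l₁
      split_ifs
      · simp only [dt]; push_cast; ring
      · rfl
    have e2 : ∀ l : Fin k, Nat.gcd (f l).1 ((f l).1 + (f l).2) = Nat.gcd (f l).1 (f l).2 := by
      intro l; simp
    simp only [e1, e2]

end HNY

/-- The He–Nie–Yu identity (Proposition 1.1): for positive integers `i < n`, `j = n − i`,
`∑_{k≥1} ∑_{((a_l,b_l)) ∈ D_k} (q−1)^{k−1} q^{1−k+[∑_{l₁<l₂}(a_{l₁}b_{l₂}−a_{l₂}b_{l₁})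
  + ∑_l gcd(a_l,b_l)]/2} = q^{(ij−n)/2+1}`,
stated for all real `q > 0` using real exponents (`rpow`).  `D_k` is the finite set of tuples of
pairs of positive integers with `∑ a_l = i`, `∑ b_l = n`, and `1 > a₁/b₁ > ⋯ > a_k/b_k > 0`;
it is empty for `k > n`, so the outer sum may be taken over `1 ≤ k ≤ n`. -/
theorem stmt11 (i n : ℕ) (hi : 0 < i) (hin : i < n) (j : ℕ) (hj : j = n - i) :
    ∀ q : ℝ, 0 < q →
      (∑ k ∈ Finset.Icc 1 n,
        ∑ f ∈ (Fintype.piFinset (fun _ : Fin k => Finset.Icc ((1 : ℕ), (1 : ℕ)) (i, n))).filter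
          (fun f : Fin k → ℕ × ℕ =>
            (∀ l, 0 < (f l).1 ∧ 0 < (f l).2) ∧ (∑ l, (f l).1 = i) ∧ (∑ l, (f l).2 = n) ∧
            (∀ l, ((f l).1 : ℚ) / ((f l).2 : ℚ) < 1) ∧
            (∀ l, 0 < ((f l).1 : ℚ) / ((f l).2 : ℚ)) ∧
            (∀ l₁ l₂ : Fin k, l₁ < l₂ →
              ((f l₂).1 : ℚ) / ((f l₂).2 : ℚ) < ((f l₁).1 : ℚ) / ((f l₁).2 : ℚ))),
          (q - 1) ^ (k - 1) *
            q ^ ((1 - (k : ℝ)) +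
              ((∑ l₂ : Fin k, ∑ l₁ : Fin k, if l₁ < l₂ then
                  ((f l₁).1 : ℝ) * ((f l₂).2 : ℝ) - ((f l₂).1 : ℝ) * ((f l₁).2 : ℝ) else 0)
                + ∑ l, (Nat.gcd (f l).1 (f l).2 : ℝ)) / 2))
      = q ^ (((i : ℝ) * (j : ℝ) - (n : ℝ)) / 2 + 1) := by
  intro q hq
  obtain rfl : n = i + j := by omega
  have hjpos : 0 < j := by omega
  have h := HNY.main q hq (i + j) (i, j) (1, 0) (by simp) hi hjpos one_pos
    (by simp only [HNY.dt]; push_cast; omega)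
  have hN : HNY.N (i, j) (1, 0) = 0 := by
    unfold HNY.N
    rw [Finset.card_eq_zero, Finset.filter_eq_empty_iff]
    intro p hp
    rw [HNY.mem_box] at hp
    simp only [HNY.dt]
    push_cast
    omega
  rw [hN, pow_zero, mul_one] at h
  rw [Finset.sum_congr rfl (fun k _ => HNY.convert_sum q i j k)]
  rw [Finset.range_eq_Ico, Finset.sum_Ico_add' (fun k => ∑ f ∈ HNY.D k (i, j) (1, 0), HNY.wt q k f)
    0 (i + j) 1] at h
  have e : Finset.Icc 1 (i + j) = Finset.Ico (0 + 1) (i + j + 1) := by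
    ext x; simp only [Finset.mem_Icc, Finset.mem_Ico]; omega
  rw [e, h]
  congr 1
  push_cast
  ring
end

section
/- Fix positive integers i, j and n = i + j. With C_k the set of convex (k+1)-gons with lattice vertices contained in the triangle Δ (vertices (0,0),(i,0),(i,j)), having the segment L from (0,0) to (i,j) as an edge and avoiding the horizontal/vertical edges of Δ except at the endpoints, one has ∑_{k≥1} ∑_{P∈C_k} (q−1)^{k−1} q^{−(k−1)} q^{i(P)+b(P)} = q^{i(Δ)+b(Δ)−(n−1)}, as an identity of rational functions in q. -/
open scoped Classical

namespace Poly12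

/-- The embedding of the integer lattice in the plane. -/
def c (p : ℤ × ℤ) : ℝ × ℝ := ((p.1 : ℝ), (p.2 : ℝ))

theorem c_inj : Function.Injective c := by
  intro p p' h
  simp only [c, Prod.mk.injEq, Int.cast_inj] at h
  exact Prod.ext h.1 h.2

/-- Convex hull of a finite set of lattice points. -/
def hull (V : Finset (ℤ × ℤ)) : Set (ℝ × ℝ) := convexHull ℝ (c '' (V : Set (ℤ × ℤ)))

theorem finite_im (V : Finset (ℤ × ℤ)) : (c '' (V : Set (ℤ × ℤ))).Finite :=
  V.finite_toSet.image c

theorem subset_hull {V : Finset (ℤ × ℤ)} {v : ℤ × ℤ} (h : v ∈ V) : c v ∈ hull V :=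
  subset_convexHull ℝ _ ⟨v, h, rfl⟩

theorem hull_le {V : Finset (ℤ × ℤ)} {K : Set (ℝ × ℝ)} (hK : Convex ℝ K)
    (h : ∀ v ∈ V, c v ∈ K) : hull V ⊆ K := by
  apply convexHull_min _ hK
  rintro _ ⟨v, hv, rfl⟩
  exact h v hv

theorem hull_convex (V : Finset (ℤ × ℤ)) : Convex ℝ (hull V) := convex_convexHull ℝ _

theorem hull_closed (V : Finset (ℤ × ℤ)) : IsClosed (hull V) :=
  (finite_im V).isClosed_convexHull ℝ

theorem hull_mono {V W : Finset (ℤ × ℤ)} (h : V ⊆ W) : hull V ⊆ hull W :=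
  hull_le (hull_convex W) fun _ hv => subset_hull (h hv)

/-- Vertices of the hull. -/
noncomputable def ext (B : Finset (ℤ × ℤ)) : Finset (ℤ × ℤ) :=
  B.filter fun v => c v ∈ (hull B).extremePoints ℝ

theorem ext_subset (B : Finset (ℤ × ℤ)) : ext B ⊆ B := Finset.filter_subset _ _

theorem mem_of_extreme {B : Finset (ℤ × ℤ)} {x : ℝ × ℝ} (h : x ∈ (hull B).extremePoints ℝ) :
    ∃ v ∈ B, c v = x := by
  obtain ⟨v, hv, rfl⟩ := extremePoints_convexHull_subset h
  exact ⟨v, hv, rfl⟩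

theorem mem_ext {B : Finset (ℤ × ℤ)} {v : ℤ × ℤ} :
    v ∈ ext B ↔ c v ∈ (hull B).extremePoints ℝ := by
  simp only [ext, Finset.mem_filter, and_iff_right_iff_imp]
  intro h
  obtain ⟨w, hw, e⟩ := mem_of_extreme h
  rwa [← c_inj e]

theorem hull_ext (B : Finset (ℤ × ℤ)) : hull (ext B) = hull B := by
  have h := closure_convexHull_extremePoints ((finite_im B).isCompact_convexHull ℝ)
    (convex_convexHull ℝ _)
  have e : (convexHull ℝ (c '' (B : Set (ℤ × ℤ)))).extremePoints ℝ
      = c '' (ext B : Set (ℤ × ℤ)) := by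
    ext x
    constructor
    · intro hx
      obtain ⟨v, hv, rfl⟩ := mem_of_extreme hx
      exact ⟨v, mem_ext.2 hx, rfl⟩
    · rintro ⟨v, hv, rfl⟩
      exact mem_ext.1 hv
  rw [e] at h
  have h2 := (hull_closed (ext B)).closure_eq
  unfold hull at *
  rw [← h, h2]

theorem ext_eq_of_hull {A B : Finset (ℤ × ℤ)} (h : hull A = hull B) : ext A = ext B := by
  ext v
  rw [mem_ext, mem_ext, h]

theorem mem_ext_iff {B : Finset (ℤ × ℤ)} {v : ℤ × ℤ} (hv : v ∈ B) :
    v ∈ ext B ↔ c v ∉ hull (B.erase v) := by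
  constructor
  · intro h hx
    have e : hull (B.erase v) = hull B := by
      apply subset_antisymm (hull_mono (Finset.erase_subset _ _))
      apply hull_le (hull_convex _)
      intro w hw
      by_cases hwv : w = v
      · rw [hwv]; exact hx
      · exact subset_hull (Finset.mem_erase.2 ⟨hwv, hw⟩)
    rw [← ext_eq_of_hull e] at h
    exact absurd (ext_subset _ h) (Finset.notMem_erase v B)
  · intro h
    by_contra hn
    apply h
    have : ext B ⊆ B.erase v := fun w hw =>
      Finset.mem_erase.2 ⟨fun e => hn (e ▸ hw), ext_subset _ hw⟩
    apply hull_mono this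
    rw [hull_ext]
    exact subset_hull hv

theorem ext_eq_self_iff {V : Finset (ℤ × ℤ)} :
    ext V = V ↔ ∀ v ∈ V, c v ∉ hull (V.erase v) := by
  constructor
  · intro h v hv
    exact (mem_ext_iff hv).1 (h.symm ▸ hv)
  · intro h
    exact subset_antisymm (ext_subset V) fun v hv => (mem_ext_iff hv).2 (h v hv)

theorem ext_ext (B : Finset (ℤ × ℤ)) : ext (ext B) = ext B := ext_eq_of_hull (hull_ext B)

theorem half_convex (a b d : ℝ) : Convex ℝ {p : ℝ × ℝ | a * p.1 + b * p.2 ≤ d} := by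
  intro p hp r hr s t hs ht hst
  simp only [Set.mem_ofPred_eq, Prod.fst_add, Prod.snd_add, Prod.smul_fst, Prod.smul_snd,
    smul_eq_mul] at *
  have : d = s * d + t * d := by rw [← add_mul, hst, one_mul]
  nlinarith [mul_le_mul_of_nonneg_left hp hs, mul_le_mul_of_nonneg_left hr ht]

theorem hull_half {V : Finset (ℤ × ℤ)} (a b d : ℤ) (h : ∀ v ∈ V, a * v.1 + b * v.2 ≤ d)
    {p : ℤ × ℤ} (hp : c p ∈ hull V) : a * p.1 + b * p.2 ≤ d := by
  have := hull_le (half_convex a b d) (V := V) (fun v hv => by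
    have := h v hv
    simp only [c, Set.mem_ofPred_eq]
    exact_mod_cast this) hp
  simp only [c, Set.mem_ofPred_eq] at this
  exact_mod_cast this

/-- Strictly interior lattice points of the triangle. -/
noncomputable def T (i j : ℕ) : Finset (ℤ × ℤ) :=
  (Finset.Icc ((0 : ℤ), (0 : ℤ)) ((i : ℤ), (j : ℤ))).filter fun v =>
    0 < v.2 ∧ v.1 < (i : ℤ) ∧ (i : ℤ) * v.2 < (j : ℤ) * v.1

/-- Lattice points of the segment. -/
noncomputable def Lp (i j : ℕ) : Finset (ℤ × ℤ) :=
  (Finset.Icc ((0 : ℤ), (0 : ℤ)) ((i : ℤ), (j : ℤ))).filter fun v =>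
    (i : ℤ) * v.2 = (j : ℤ) * v.1

/-- Lattice points of the triangle. -/
noncomputable def D (i j : ℕ) : Finset (ℤ × ℤ) :=
  (Finset.Icc ((0 : ℤ), (0 : ℤ)) ((i : ℤ), (j : ℤ))).filter fun v =>
    (i : ℤ) * v.2 ≤ (j : ℤ) * v.1

/-- End points of the segment. -/
def E (i j : ℕ) : Finset (ℤ × ℤ) := {((0 : ℤ), (0 : ℤ)), ((i : ℤ), (j : ℤ))}

theorem mem_T {i j : ℕ} {v : ℤ × ℤ} : v ∈ T i j ↔
    (0 ≤ v.1 ∧ 0 ≤ v.2 ∧ v.1 ≤ i ∧ v.2 ≤ j) ∧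
      0 < v.2 ∧ v.1 < (i : ℤ) ∧ (i : ℤ) * v.2 < (j : ℤ) * v.1 := by
  simp only [T, Finset.mem_filter, Finset.mem_Icc, Prod.le_def]
  tauto

theorem mem_Lp {i j : ℕ} {v : ℤ × ℤ} : v ∈ Lp i j ↔
    (0 ≤ v.1 ∧ 0 ≤ v.2 ∧ v.1 ≤ i ∧ v.2 ≤ j) ∧ (i : ℤ) * v.2 = (j : ℤ) * v.1 := by
  simp only [Lp, Finset.mem_filter, Finset.mem_Icc, Prod.le_def]
  tauto

theorem mem_D {i j : ℕ} {v : ℤ × ℤ} : v ∈ D i j ↔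
    (0 ≤ v.1 ∧ 0 ≤ v.2 ∧ v.1 ≤ i ∧ v.2 ≤ j) ∧ (i : ℤ) * v.2 ≤ (j : ℤ) * v.1 := by
  simp only [D, Finset.mem_filter, Finset.mem_Icc, Prod.le_def]
  tauto

theorem mem_E {i j : ℕ} {v : ℤ × ℤ} : v ∈ E i j ↔
    v = ((0 : ℤ), (0 : ℤ)) ∨ v = ((i : ℤ), (j : ℤ)) := by
  simp [E]

theorem card_E {i j : ℕ} (hi : 0 < i) : (E i j).card = 2 := by
  apply Finset.card_pair
  intro h
  have := congrArg Prod.fst h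
  simp at this
  omega

theorem disj_TE {i j : ℕ} : Disjoint (T i j) (E i j) := by
  rw [Finset.disjoint_left]
  intro v hv he
  rw [mem_T] at hv
  rcases mem_E.1 he with rfl | rfl
  · simp at hv
  · simp at hv

theorem disj_TL {i j : ℕ} : Disjoint (T i j) (Lp i j) := by
  rw [Finset.disjoint_left]
  intro v hv he
  rw [mem_T] at hv
  rw [mem_Lp] at he
  omega

/-- The lattice points in a set. -/
def pts (K : Set (ℝ × ℝ)) : Set (ℤ × ℤ) := {p | c p ∈ K}

theorem pts_split {K : Set (ℝ × ℝ)} (hK : IsClosed K) (hf : (pts K).Finite) :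
    (({p : ℤ × ℤ | c p ∈ interior K}.ncard : ℤ) + ({p : ℤ × ℤ | c p ∈ frontier K}.ncard : ℤ))
      = ((pts K).ncard : ℤ) := by
  have hsub : {p : ℤ × ℤ | c p ∈ interior K} ⊆ pts K := by
    intro p hp
    exact interior_subset (s := K) hp
  have e : {p : ℤ × ℤ | c p ∈ frontier K} = pts K \ {p : ℤ × ℤ | c p ∈ interior K} := by
    rw [hK.frontier_eq]; rfl
  rw [e, add_comm]
  exact_mod_cast Set.ncard_sdiff_add_ncard_of_subset hsub hf

/-- Lattice points of the hull of `V` in the interior of the triangle. -/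
noncomputable def H (i j : ℕ) (V : Finset (ℤ × ℤ)) : Finset (ℤ × ℤ) :=
  (T i j).filter fun p => c p ∈ hull V

theorem Lp_hull {i j : ℕ} (hi : 0 < i) {V : Finset (ℤ × ℤ)} (hE : E i j ⊆ V) {p : ℤ × ℤ}
    (hp : p ∈ Lp i j) : c p ∈ hull V := by
  rw [mem_Lp] at hp
  obtain ⟨⟨h1, h2, h3, h4⟩, h5⟩ := hp
  have a1 : c (0, 0) ∈ hull V := subset_hull (hE (mem_E.2 (Or.inl rfl)))
  have a2 : c (i, j) ∈ hull V := subset_hull (hE (mem_E.2 (Or.inr rfl)))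
  have hi' : (0 : ℝ) < i := by exact_mod_cast hi
  have h1' : (0 : ℝ) ≤ p.1 := by exact_mod_cast h1
  have h3' : (p.1 : ℝ) ≤ i := by exact_mod_cast h3
  have h5' : (i : ℝ) * p.2 = j * p.1 := by exact_mod_cast h5
  have := hull_convex V a1 a2 (a := 1 - p.1 / i) (b := p.1 / i)
    (by rw [sub_nonneg, div_le_one hi']; exact h3') (by positivity) (by ring)
  convert this using 1
  ext
  · simp [c]; field_simp
  · simp [c]; field_simp; linarith

theorem pts_hull {i j : ℕ} (hi : 0 < i) (hj : 0 < j) {V : Finset (ℤ × ℤ)} (hE : E i j ⊆ V)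
    (hV : V ⊆ T i j ∪ E i j) : pts (hull V) = ((H i j V ∪ Lp i j : Finset (ℤ × ℤ)) : Set (ℤ × ℤ)) := by
  ext p
  simp only [pts, Set.mem_ofPred_eq, Finset.coe_union, Set.mem_union, Finset.mem_coe]
  constructor
  · intro hp
    have cases : ∀ v ∈ V, ((0 ≤ v.1 ∧ 0 ≤ v.2 ∧ v.1 ≤ i ∧ v.2 ≤ j) ∧
      0 < v.2 ∧ v.1 < (i : ℤ) ∧ (i : ℤ) * v.2 < (j : ℤ) * v.1) ∨ v = ((0 : ℤ), (0 : ℤ)) ∨ 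
        v = ((i : ℤ), (j : ℤ)) := by
      intro v hv
      rcases Finset.mem_union.1 (hV hv) with h | h
      · exact Or.inl (mem_T.1 h)
      · exact Or.inr (mem_E.1 h)
    have hi' : (1 : ℤ) ≤ i := by exact_mod_cast hi
    have hj' : (1 : ℤ) ≤ j := by exact_mod_cast hj
    have b1 := hull_half (-1) 0 0 (fun v hv => by
      rcases cases v hv with h | rfl | rfl <;> simp <;> omega) hp
    have b2 := hull_half 0 (-1) 0 (fun v hv => by
      rcases cases v hv with h | rfl | rfl <;> simp <;> omega) hp
    have b3 := hull_half 1 0 i (fun v hv => by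
      rcases cases v hv with h | rfl | rfl <;> simp <;> omega) hp
    have b4 := hull_half 0 1 j (fun v hv => by
      rcases cases v hv with h | rfl | rfl <;> simp <;> omega) hp
    have b5 := hull_half (-j) i 0 (fun v hv => by
      rcases cases v hv with h | rfl | rfl
      · linarith [h.2.2.2]
      · simp
      · simp; linarith [mul_comm (i : ℤ) j]) hp
    have b6 := hull_half 1 (-i) 0 (fun v hv => by
      rcases cases v hv with h | rfl | rfl
      · nlinarith
      · simp
      · simp; nlinarith) hp
    have b7 := hull_half j (-1) (j * i - j) (fun v hv => by
      rcases cases v hv with h | rfl | rfl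
      · nlinarith
      · simp; nlinarith
      · simp; ) hp
    by_cases hl : p ∈ Lp i j
    · exact Or.inr hl
    · left
      have hlt : (i : ℤ) * p.2 < j * p.1 := by
        apply lt_of_le_of_ne (by linarith)
        intro h
        exact hl (mem_Lp.2 ⟨⟨by omega, by omega, by omega, by omega⟩, h⟩)
      refine Finset.mem_filter.2 ⟨mem_T.2 ⟨⟨by omega, by omega, by omega, by omega⟩, ?_, ?_, hlt⟩, hp⟩
      · by_contra h
        have h0 : p.2 = 0 := by omega
        rw [h0] at b6 hlt
        nlinarith
      · by_contra h
        have h0 : p.1 = i := by omega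
        rw [h0] at b7 hlt
        nlinarith
  · rintro (hp | hp)
    · exact (Finset.mem_filter.1 hp).2
    · exact Lp_hull hi hE hp

theorem disj_HL {i j : ℕ} {V : Finset (ℤ × ℤ)} : Disjoint (H i j V) (Lp i j) :=
  Finset.disjoint_of_subset_left (Finset.filter_subset _ _) disj_TL

theorem count_hull {i j : ℕ} (hi : 0 < i) (hj : 0 < j) {V : Finset (ℤ × ℤ)} (hE : E i j ⊆ V)
    (hV : V ⊆ T i j ∪ E i j) :
    (({p : ℤ × ℤ | c p ∈ interior (hull V)}.ncard : ℤ)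
      + ({p : ℤ × ℤ | c p ∈ frontier (hull V)}.ncard : ℤ))
      = ((H i j V).card : ℤ) + (Lp i j).card := by
  have h := pts_hull hi hj hE hV
  rw [pts_split (hull_closed V) (by rw [h]; exact Finset.finite_toSet _), h, Set.ncard_coe_finset,
    Finset.card_union_of_disjoint disj_HL]
  push_cast; rfl

/-- The triangle vertices. -/
def tri (i j : ℕ) : Finset (ℤ × ℤ) :=
  {((0 : ℤ), (0 : ℤ)), ((i : ℤ), (0 : ℤ)), ((i : ℤ), (j : ℤ))}

theorem pts_tri {i j : ℕ} (hi : 0 < i) (hj : 0 < j) :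
    pts (hull (tri i j)) = (D i j : Set (ℤ × ℤ)) := by
  ext p
  simp only [pts, Set.mem_ofPred_eq, Finset.mem_coe, mem_D]
  constructor
  · intro hp
    have cases : ∀ v ∈ tri i j, v = ((0 : ℤ), (0 : ℤ)) ∨ v = ((i : ℤ), (0 : ℤ)) ∨ 
        v = ((i : ℤ), (j : ℤ)) := by
      intro v hv
      simpa [tri] using hv
    have b1 := hull_half (-1) 0 0 (fun v hv => by
      rcases cases v hv with rfl | rfl | rfl <;> simp) hp
    have b2 := hull_half 0 (-1) 0 (fun v hv => by
      rcases cases v hv with rfl | rfl | rfl <;> simp) hp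
    have b3 := hull_half 1 0 i (fun v hv => by
      rcases cases v hv with rfl | rfl | rfl <;> simp) hp
    have b4 := hull_half 0 1 j (fun v hv => by
      rcases cases v hv with rfl | rfl | rfl <;> simp) hp
    have b5 := hull_half (-j) i 0 (fun v hv => by
      rcases cases v hv with rfl | rfl | rfl
      · simp
      · simp; positivity
      · simp; linarith [mul_comm (i : ℤ) j]) hp
    refine ⟨⟨by omega, by omega, by omega, by omega⟩, by linarith⟩
  · rintro ⟨⟨h1, h2, h3, h4⟩, h5⟩
    have a1 : c (0, 0) ∈ hull (tri i j) := subset_hull (by simp [tri])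
    have a2 : c (i, 0) ∈ hull (tri i j) := subset_hull (by simp [tri])
    have a3 : c (i, j) ∈ hull (tri i j) := subset_hull (by simp [tri])
    have hi' : (0 : ℝ) < i := by exact_mod_cast hi
    have hj' : (0 : ℝ) < j := by exact_mod_cast hj
    have h2' : (0 : ℝ) ≤ p.2 := by exact_mod_cast h2
    have h3' : (p.1 : ℝ) ≤ i := by exact_mod_cast h3
    have h5' : (i : ℝ) * p.2 ≤ j * p.1 := by exact_mod_cast h5
    have key := (hull_convex (tri i j)).sum_mem (t := (Finset.univ : Finset (Fin 3)))
      (w := ![1 - (p.1 : ℝ) / i, (p.1 : ℝ) / i - (p.2 : ℝ) / j, (p.2 : ℝ) / j])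
      (z := ![c (0, 0), c (i, 0), c (i, j)])
      (by
        intro k _
        fin_cases k
        · simp; rw [div_le_one hi']; exact h3'
        · simp; rw [div_le_div_iff₀ hj' hi']; linarith
        · simp; positivity)
      (by simp [Fin.sum_univ_three])
      (by intro k _; fin_cases k <;> simpa)
    convert key using 1
    ext
    · simp [Fin.sum_univ_three, c]; field_simp; ring
    · simp [Fin.sum_univ_three, c]; field_simp

/-- Lattice points on the legs, apart from the end points of the hypotenuse. -/
noncomputable def legs (i j : ℕ) : Finset (ℤ × ℤ) :=
  (Finset.Icc (1 : ℤ) i) ×ˢ {(0 : ℤ)} ∪ {(i : ℤ)} ×ˢ (Finset.Icc (1 : ℤ) (j - 1))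

theorem card_legs {i j : ℕ} (hj : 0 < j) : ((legs i j).card : ℤ) = i + j - 1 := by
  unfold legs
  rw [Finset.card_union_of_disjoint]
  · simp; omega
  · rw [Finset.disjoint_left]
    intro v
    simp only [Finset.mem_product, Finset.mem_Icc, Finset.mem_singleton]
    omega

theorem D_eq {i j : ℕ} (hi : 0 < i) (hj : 0 < j) : D i j = (T i j ∪ Lp i j) ∪ legs i j := by
  ext v
  have hi' : (1 : ℤ) ≤ i := by exact_mod_cast hi
  have hj' : (1 : ℤ) ≤ j := by exact_mod_cast hj
  simp only [legs, Finset.mem_union, mem_D, mem_T, mem_Lp, Finset.mem_product, Finset.mem_Icc,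
    Finset.mem_singleton]
  obtain ⟨x, y⟩ := v
  simp only
  constructor
  · rintro ⟨h, h5⟩
    rcases lt_or_eq_of_le h5 with h6 | h6
    · by_cases hy : y = 0
      · right; left
        subst hy
        refine ⟨⟨?_, by omega⟩, rfl⟩
        nlinarith
      · by_cases hx : x = i
        · right; right
          subst hx
          refine ⟨rfl, by omega, ?_⟩
          nlinarith
        · left; left
          exact ⟨h, by omega, by omega, h6⟩
    · left; right; exact ⟨h, h6⟩
  · rintro ((h | h) | h | h)
    · exact ⟨h.1, h.2.2.2.le⟩
    · exact ⟨h.1, h.2.le⟩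
    · obtain ⟨h, rfl⟩ := h
      refine ⟨by omega, ?_⟩
      nlinarith
    · obtain ⟨rfl, h⟩ := h
      refine ⟨by omega, ?_⟩
      nlinarith

theorem card_D {i j : ℕ} (hi : 0 < i) (hj : 0 < j) :
    ((D i j).card : ℤ) = (T i j).card + (Lp i j).card + (i + j - 1) := by
  rw [D_eq hi hj, Finset.card_union_of_disjoint, Finset.card_union_of_disjoint disj_TL]
  · push_cast; rw [card_legs hj]
  · rw [Finset.disjoint_left]
    have hi' : (1 : ℤ) ≤ i := by exact_mod_cast hi
    have hj' : (1 : ℤ) ≤ j := by exact_mod_cast hj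
    rintro ⟨x, y⟩
    simp only [legs, Finset.mem_union, mem_T, mem_Lp, Finset.mem_product, Finset.mem_Icc,
      Finset.mem_singleton]
    rintro (h | ⟨h, h'⟩) (⟨h1, rfl⟩ | ⟨rfl, h1⟩)
    · omega
    · omega
    · nlinarith
    · nlinarith

theorem count_tri {i j : ℕ} (hi : 0 < i) (hj : 0 < j) :
    (({p : ℤ × ℤ | c p ∈ interior (hull (tri i j))}.ncard : ℤ)
      + ({p : ℤ × ℤ | c p ∈ frontier (hull (tri i j))}.ncard : ℤ))
      = (T i j).card + (Lp i j).card + (i + j - 1) := by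
  have h := pts_tri hi hj
  rw [pts_split (hull_closed _) (by rw [h]; exact Finset.finite_toSet _), h, Set.ncard_coe_finset,
    card_D hi hj]

/-- Admissible vertex sets. -/
noncomputable def adm (i j : ℕ) : Finset (Finset (ℤ × ℤ)) :=
  (T i j ∪ E i j).powerset.filter fun V => E i j ⊆ V ∧ ext V = V

theorem mem_adm {i j : ℕ} {V : Finset (ℤ × ℤ)} :
    V ∈ adm i j ↔ V ⊆ T i j ∪ E i j ∧ E i j ⊆ V ∧ ext V = V := by
  rw [adm, Finset.mem_filter, Finset.mem_powerset]

theorem E_ext {i j : ℕ} (hi : 0 < i) (hj : 0 < j) {A : Finset (ℤ × ℤ)} (hA : A ⊆ T i j) :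
    E i j ⊆ ext (A ∪ E i j) := by
  intro v hv
  rw [mem_ext_iff (Finset.mem_union_right _ hv)]
  intro hx
  have cases : ∀ w ∈ (A ∪ E i j).erase v, w ≠ v ∧ ((0 < w.2 ∧ w.1 < (i : ℤ)) ∨
      w = ((0 : ℤ), (0 : ℤ)) ∨ w = ((i : ℤ), (j : ℤ))) := by
    intro w hw
    obtain ⟨h1, h2⟩ := Finset.mem_erase.1 hw
    refine ⟨h1, ?_⟩
    rcases Finset.mem_union.1 h2 with h | h
    · have := mem_T.1 (hA h)
      exact Or.inl ⟨this.2.1, this.2.2.1⟩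
    · exact Or.inr (mem_E.1 h)
  rcases mem_E.1 hv with rfl | rfl
  · have := hull_half 0 (-1) (-1) (fun w hw => by
      rcases cases w hw with ⟨h0, h | h | h⟩
      · omega
      · exact absurd h h0
      · rw [h]; simp; omega) hx
    simp at this
  · have := hull_half 1 0 (i - 1) (fun w hw => by
      rcases cases w hw with ⟨h0, h | h | h⟩
      · omega
      · rw [h]; simp; omega
      · exact absurd h h0) hx
    simp at this

theorem sum_Icc (q : ℝ) (W U : Finset (ℤ × ℤ)) (h : W ⊆ U) :
    ∑ A ∈ Finset.Icc W U, (q - 1) ^ A.card = (q - 1) ^ W.card * q ^ (U.card - W.card) := by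
  rw [Finset.Icc_eq_image_powerset h, Finset.sum_image]
  · have := Finset.sum_pow_mul_eq_add_pow (q - 1) 1 (U \ W)
    simp only [one_pow, mul_one, sub_add_cancel] at this
    rw [← Finset.card_sdiff_of_subset h, ← this, Finset.mul_sum]
    refine Finset.sum_congr rfl fun B hB => ?_
    rw [Finset.card_union_of_disjoint, pow_add]
    exact Finset.disjoint_of_subset_right (Finset.mem_powerset.1 hB) Finset.disjoint_sdiff
  · intro B hB B' hB' e
    have d : ∀ B ⊆ U \ W, (W ∪ B) \ W = B := fun B hB =>
      Finset.union_sdiff_cancel_left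
        (Finset.disjoint_of_subset_right hB Finset.disjoint_sdiff)
    rw [← d B (Finset.mem_powerset.1 hB), ← d B' (Finset.mem_powerset.1 hB')]
    exact congrArg (· \ W) e

theorem fiber {i j : ℕ} {V : Finset (ℤ × ℤ)} (hV : V ∈ adm i j) :
    (T i j).powerset.filter (fun A => ext (A ∪ E i j) = V) = Finset.Icc (V \ E i j) (H i j V) := by
  obtain ⟨h1, h2, h3⟩ := mem_adm.1 hV
  ext A
  simp only [Finset.mem_filter, Finset.mem_powerset, Finset.mem_Icc]
  constructor
  · rintro ⟨hA, rfl⟩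
    constructor
    · intro v hv
      obtain ⟨a, b⟩ := Finset.mem_sdiff.1 hv
      exact (Finset.mem_union.1 (ext_subset _ a)).resolve_right b
    · intro v hv
      refine Finset.mem_filter.2 ⟨hA hv, ?_⟩
      rw [hull_ext]
      exact subset_hull (Finset.mem_union_left _ hv)
  · rintro ⟨ha, hb⟩
    refine ⟨hb.trans (Finset.filter_subset _ _), ?_⟩
    rw [← h3]
    apply ext_eq_of_hull
    apply subset_antisymm
    · apply hull_le (hull_convex _)
      intro v hv
      rcases Finset.mem_union.1 hv with h | h
      · exact (Finset.mem_filter.1 (hb h)).2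
      · exact subset_hull (h2 h)
    · apply hull_mono
      intro v hv
      by_cases hvE : v ∈ E i j
      · exact Finset.mem_union_right _ hvE
      · exact Finset.mem_union_left _ (ha (Finset.mem_sdiff.2 ⟨hv, hvE⟩))

theorem sub_H {i j : ℕ} {V : Finset (ℤ × ℤ)} (hV : V ∈ adm i j) : V \ E i j ⊆ H i j V := by
  obtain ⟨h1, h2, h3⟩ := mem_adm.1 hV
  intro v hv
  obtain ⟨a, b⟩ := Finset.mem_sdiff.1 hv
  exact Finset.mem_filter.2 ⟨(Finset.mem_union.1 (h1 a)).resolve_right b, subset_hull a⟩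

theorem main {i j : ℕ} (hi : 0 < i) (hj : 0 < j) (q : ℝ) :
    ∑ V ∈ adm i j, (q - 1) ^ (V \ E i j).card * q ^ ((H i j V).card - (V \ E i j).card)
      = q ^ (T i j).card := by
  have := Finset.sum_pow_mul_eq_add_pow (q - 1) 1 (T i j)
  simp only [one_pow, mul_one, sub_add_cancel] at this
  rw [← this, ← Finset.sum_fiberwise_of_maps_to (s := (T i j).powerset) (t := adm i j)
    (g := fun A => ext (A ∪ E i j))]
  · refine Finset.sum_congr rfl fun V hV => ?_
    rw [fiber hV, sum_Icc _ _ _ (sub_H hV)]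
  · intro A hA
    have hA := Finset.mem_powerset.1 hA
    exact mem_adm.2 ⟨(ext_subset _).trans (Finset.union_subset_union_left hA), E_ext hi hj hA,
      ext_ext _⟩

end Poly12

open Poly12 in
/-- With `C = ⋃_{k≥1} C_k` the finite set of admissible convex lattice polygons (encoded by their
vertex finsets, so that a polygon `P ∈ C_k` has `v(P) = k + 1` vertices),
`∑_{k≥1} ∑_{P∈C_k} (q−1)^{k−1} q^{−(k−1)} q^{i(P)+b(P)} = q^{i(Δ)+b(Δ)−(n−1)}`
for every real `q > 0`, where for `V ∈ C` we have `k − 1 = V.card − 2`. -/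
theorem stmt12 (i j : ℕ) (hi : 0 < i) (hj : 0 < j) (n : ℕ) (hn : n = i + j)
    (coe : ℤ × ℤ → ℝ × ℝ) (hcoe : coe = fun p => ((p.1 : ℝ), (p.2 : ℝ)))
    (Δ : Set (ℝ × ℝ))
    (hΔ : Δ = convexHull ℝ {((0 : ℝ), (0 : ℝ)), ((i : ℝ), (0 : ℝ)), ((i : ℝ), (j : ℝ))})
    (C : Finset (Finset (ℤ × ℤ)))
    (hC : C = (Finset.Icc ((0 : ℤ), (0 : ℤ)) ((i : ℤ), (j : ℤ))).powerset.filter (fun V =>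
      2 ≤ V.card ∧ ((0, 0) : ℤ × ℤ) ∈ V ∧ ((i : ℤ), (j : ℤ)) ∈ V ∧
      (∀ v ∈ V, coe v ∉ convexHull ℝ (coe '' ((V.erase v : Finset (ℤ × ℤ)) : Set (ℤ × ℤ)))) ∧
      (∀ v ∈ V, v ≠ ((0, 0) : ℤ × ℤ) → v ≠ ((i : ℤ), (j : ℤ)) →
        0 < v.2 ∧ v.1 < (i : ℤ) ∧ (i : ℤ) * v.2 < (j : ℤ) * v.1))) :
    ∀ q : ℝ, 0 < q →
      ∑ V ∈ C, (q - 1) ^ (V.card - 2) * q ^ (-((V.card : ℤ) - 2)) *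
          q ^ ((({p : ℤ × ℤ | coe p ∈
                interior (convexHull ℝ (coe '' ((V : Finset (ℤ × ℤ)) : Set (ℤ × ℤ))))}.ncard : ℤ)
            + ({p : ℤ × ℤ | coe p ∈
                frontier (convexHull ℝ (coe '' ((V : Finset (ℤ × ℤ)) : Set (ℤ × ℤ))))}.ncard : ℤ)))
      = q ^ ((({p : ℤ × ℤ | coe p ∈ interior Δ}.ncard : ℤ)
            + ({p : ℤ × ℤ | coe p ∈ frontier Δ}.ncard : ℤ)) - ((n : ℤ) - 1)) := by
  have hc : coe = c := by rw [hcoe]; rfl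
  subst hc
  have hΔ' : Δ = hull (tri i j) := by
    rw [hΔ, hull, tri]
    congr 1
    simp [Set.image_insert_eq, c]
  have hCa : C = adm i j := by
    rw [hC]
    ext V
    rw [mem_adm, ext_eq_self_iff, Finset.mem_filter, Finset.mem_powerset]
    constructor
    · rintro ⟨h1, h2, h3, h4, h5, h6⟩
      refine ⟨?_, ?_, h5⟩
      · intro v hv
        rw [Finset.mem_union, mem_E]
        by_cases e1 : v = (0, 0)
        · exact Or.inr (Or.inl e1)
        by_cases e2 : v = ((i : ℤ), (j : ℤ))
        · exact Or.inr (Or.inr e2)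
        exact Or.inl (Finset.mem_filter.2 ⟨h1 hv, h6 v hv e1 e2⟩)
      · intro v hv
        rcases mem_E.1 hv with rfl | rfl
        · exact h3
        · exact h4
    · rintro ⟨h1, h2, h3⟩
      refine ⟨?_, ?_, h2 (mem_E.2 (Or.inl rfl)), h2 (mem_E.2 (Or.inr rfl)), h3, ?_⟩
      · intro v hv
        rcases Finset.mem_union.1 (h1 hv) with h | h
        · exact (Finset.mem_filter.1 h).1
        · rcases mem_E.1 h with rfl | rfl <;> simp [Prod.le_def]
      · rw [← card_E (j := j) hi]
        exact Finset.card_le_card h2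
      · intro v hv e1 e2
        rcases Finset.mem_union.1 (h1 hv) with h | h
        · exact (Finset.mem_filter.1 h).2
        · rcases mem_E.1 h with h | h
          · exact absurd h e1
          · exact absurd h e2
  intro q hq
  have hq0 : q ≠ 0 := hq.ne'
  rw [hΔ', count_tri hi hj, hCa, hn]
  have er : ((T i j).card : ℤ) + (Lp i j).card + (i + j - 1) - (((i + j : ℕ) : ℤ) - 1)
      = ((T i j).card + (Lp i j).card : ℕ) := by push_cast; ring
  rw [er, zpow_natCast, pow_add, ← main hi hj q, Finset.sum_mul]
  refine Finset.sum_congr rfl fun V hV => ?_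
  obtain ⟨h1, h2, h3⟩ := mem_adm.1 hV
  have hcnt := count_hull hi hj h2 h1
  unfold hull at hcnt
  rw [hcnt]
  have hcard : (V \ E i j).card = V.card - 2 := by
    rw [Finset.card_sdiff_of_subset h2, card_E hi]
  have h2c : 2 ≤ V.card := by
    rw [← card_E (j := j) hi]
    exact Finset.card_le_card h2
  have hle := Finset.card_le_card (sub_H hV)
  rw [hcard] at hle ⊢
  rw [mul_assoc, mul_assoc, ← zpow_add₀ hq0, ← pow_add, ← zpow_natCast q]
  congr 2
  push_cast [Nat.cast_sub hle, Nat.cast_sub h2c]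
  ring
end
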